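/- The family of semi-invariants f_{T^±}, indexed by all semi-standard linked tableaux pairs (T^-, T^+, σ), is a basis of the semi-invariant ring of the generalized Kronecker quiver as a ℂ-vector space. -/

import Mathlib

namespace QuiverSAGBI

/-- The variable `x^i_{jk}`: the `(j,k)` entry of the generic matrix `M_i`. -/
abbrev KVar (K r0 r1 : ℕ) := Fin K × Fin r1 × Fin r0

/-- The coordinate ring of the representation space of the generalized
Kronecker quiver with `K` arrows and dimension vector `(r0, r1)`. -/
abbrev KPoly (K r0 r1 : ℕ) := MvPolynomial (KVar K r0 r1) ℂ

/-- `x_v` is a greater variable than `x_w`:  `v.1 < w.1`, or `v.1 = w.1` and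
`v.2.1 < w.2.1`, or these agree and `v.2.2 < w.2.2`. -/
def VarGT {K r0 r1 : ℕ} (v w : KVar K r0 r1) : Prop :=
  v.1 < w.1 ∨ (v.1 = w.1 ∧ (v.2.1 < w.2.1 ∨ (v.2.1 = w.2.1 ∧ v.2.2 < w.2.2)))

/-- The monomial with exponent vector `a` is smaller than the one with exponent
vector `b` in the lexicographic term order: at the most significant variable
where they differ, `a` has the smaller exponent. -/
def MonLT {K r0 r1 : ℕ} (a b : KVar K r0 r1 →₀ ℕ) : Prop :=
  ∃ v, a v < b v ∧ ∀ w, VarGT w v → a w = b w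

/-- `mo` is the leading monomial (exponent vector) of `f`. -/
def IsLM {K r0 r1 : ℕ} (f : KPoly K r0 r1) (mo : KVar K r0 r1 →₀ ℕ) : Prop :=
  mo ∈ f.support ∧ ∀ m' ∈ f.support, m' = mo ∨ MonLT m' mo

/-- The substitution action of a pair of matrices `(g, h)` on the coordinate
ring: `x^i_{jk} ↦ ∑ (h⁻¹)_{j j'} x^i_{j'k'} g_{k' k}`, i.e. `M_i ↦ h⁻¹ M_i g`. -/
noncomputable def glAct {K r0 r1 : ℕ} (g : Matrix (Fin r0) (Fin r0) ℂ)
    (h : Matrix (Fin r1) (Fin r1) ℂ) : KPoly K r0 r1 →ₐ[ℂ] KPoly K r0 r1 :=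
  MvPolynomial.aeval fun v : KVar K r0 r1 =>
    ∑ j' : Fin r1, ∑ k' : Fin r0,
      MvPolynomial.C (h⁻¹ v.2.1 j' * g k' v.2.2) * MvPolynomial.X (v.1, j', k')

/-- `f` is a semi-invariant of weight `(w0, w1)`. -/
def IsSemiInvariant {K r0 r1 : ℕ} (f : KPoly K r0 r1) (w0 w1 : ℤ) : Prop :=
  ∀ (g : Matrix (Fin r0) (Fin r0) ℂ) (h : Matrix (Fin r1) (Fin r1) ℂ),
    IsUnit g.det → IsUnit h.det →
      glAct g h f = MvPolynomial.C (g.det ^ w0 * h.det ^ w1) * f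

/-- The semi-invariant ring: the linear span of all semi-invariants. -/
noncomputable def semiInvariantRing (K r0 r1 : ℕ) : Submodule ℂ (KPoly K r0 r1) :=
  Submodule.span ℂ {f | ∃ w0 w1 : ℤ, IsSemiInvariant f w0 w1}

/-- A linked tableaux pair for the generalized Kronecker quiver:
`Tm` is the tableau `T⁻` (with `r0` rows and `cm` columns, labels `(i,q)`),
`Tp` is the tableau `T⁺` (with `r1` rows and `cp` columns, labels `(i,p)`),
and `link` is a bijection of boxes sending the box labeled `(i,q)` in row `p`
of `T⁻` to a box labeled `(i,p)` lying in row `q` of `T⁺`. -/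
structure LinkedPair (K r0 r1 cm cp : ℕ) where
  Tm : Fin r0 → Fin cm → Fin K × Fin r1
  Tp : Fin r1 → Fin cp → Fin K × Fin r0
  link : Fin r0 × Fin cm ≃ Fin r1 × Fin cp
  link_row : ∀ p c, (link (p, c)).1 = (Tm p c).2
  link_label : ∀ p c, Tp (link (p, c)).1 (link (p, c)).2 = ((Tm p c).1, p)

/-- The exponent vector of `Mon(T⁺)`: a box labeled `(i,k)` in row `q` of `T⁺`
contributes the variable `x^i_{qk}`. -/
noncomputable def monExpP {K r0 r1 cm cp : ℕ} (L : LinkedPair K r0 r1 cm cp) :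
    KVar K r0 r1 →₀ ℕ :=
  ∑ q : Fin r1, ∑ c : Fin cp, Finsupp.single ((L.Tp q c).1, q, (L.Tp q c).2) 1

/-- The exponent vector of `Mon(T⁻)`: a box labeled `(i,j)` in row `p` of `T⁻`
contributes the variable `x^i_{jp}`. -/
noncomputable def monExpM {K r0 r1 cm cp : ℕ} (L : LinkedPair K r0 r1 cm cp) :
    KVar K r0 r1 →₀ ℕ :=
  ∑ p : Fin r0, ∑ c : Fin cm, Finsupp.single ((L.Tm p c).1, (L.Tm p c).2, p) 1

/-- The semi-invariant `f_{T^±}` attached to a linked tableaux pair: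
`∑_{α⁻, α⁺} sign(α⁻) sign(α⁺) Mon(α⁻ · α⁺ · T⁺)`, where `α⁺` permutes the
entries of each column of `T⁺` among its rows and `α⁻` permutes the second
entries of the labels of the boxes of `T⁺` linked to each column of `T⁻`. -/
noncomputable def pairPoly {K r0 r1 cm cp : ℕ} (L : LinkedPair K r0 r1 cm cp) :
    KPoly K r0 r1 :=
  ∑ αm : Fin cm → Equiv.Perm (Fin r0), ∑ αp : Fin cp → Equiv.Perm (Fin r1),
    ((∏ l, (Equiv.Perm.sign (αm l) : ℤ)) * ∏ c, (Equiv.Perm.sign (αp c) : ℤ)) •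
      ∏ p : Fin r0, ∏ l : Fin cm,
        MvPolynomial.X
          ((L.Tm p l).1, αp (L.link (p, l)).2 (L.link (p, l)).1, αm l p)

/-- The order on labels: `(i,p) ≤ (j,q)` iff `i < j`, or `i = j` and `p ≤ q`. -/
def LabelLE {K n : ℕ} (a b : Fin K × Fin n) : Prop :=
  a.1 < b.1 ∨ (a.1 = b.1 ∧ a.2 ≤ b.2)

/-- Strict version of the label order. -/
def LabelLT {K n : ℕ} (a b : Fin K × Fin n) : Prop :=
  a.1 < b.1 ∨ (a.1 = b.1 ∧ a.2 < b.2)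

/-- A rectangular tableau is semi-standard if its entries are weakly increasing
along each row and strictly increasing down each column. -/
def IsSemiStandardTab {rows cols K n : ℕ}
    (T : Fin rows → Fin cols → Fin K × Fin n) : Prop :=
  (∀ (i : Fin rows) (c c' : Fin cols), c ≤ c' → LabelLE (T i c) (T i c')) ∧
  (∀ (c : Fin cols) (i i' : Fin rows), i < i' → LabelLT (T i c) (T i' c))

/-- The link is semi-standard: boxes with equal labels in the same row of `T⁻`
are matched with their partners in `T⁺` in a left-to-right
order-preserving way. -/
def IsSemiStandardLink {K r0 r1 cm cp : ℕ}
    (L : LinkedPair K r0 r1 cm cp) : Prop :=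
  ∀ (p : Fin r0) (c c' : Fin cm), L.Tm p c = L.Tm p c' → c < c' →
    (L.link (p, c)).2 < (L.link (p, c')).2

/-- A semi-standard linked tableaux pair: both tableaux and the link are
semi-standard. -/
def IsSemiStandardPair {K r0 r1 cm cp : ℕ}
    (L : LinkedPair K r0 r1 cm cp) : Prop :=
  IsSemiStandardTab L.Tm ∧ IsSemiStandardTab L.Tp ∧ IsSemiStandardLink L

/-- A (nonempty) semi-standard linked tableaux pair is primitive if its leading
monomial is not the product of the leading monomials of two (nonempty)
semi-standard linked tableaux pairs. -/
def IsPrimitive {K r0 r1 cm cp : ℕ} (L : LinkedPair K r0 r1 cm cp) : Prop :=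
  IsSemiStandardPair L ∧ 0 < cm ∧
    ¬∃ (cm1 cp1 cm2 cp2 : ℕ) (L1 : LinkedPair K r0 r1 cm1 cp1)
        (L2 : LinkedPair K r0 r1 cm2 cp2) (m m1 m2 : KVar K r0 r1 →₀ ℕ),
        0 < cm1 ∧ 0 < cm2 ∧ IsSemiStandardPair L1 ∧ IsSemiStandardPair L2 ∧
        IsLM (pairPoly L) m ∧ IsLM (pairPoly L1) m1 ∧ IsLM (pairPoly L2) m2 ∧
        m = m1 + m2

/-!
A semi-standard pair `(T⁻, T⁺)` has `Mon(T⁺)` as the leading monomial of its semi-invariant: a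
permutation of the columns of the two tableaux that does not decrease the monomial must preserve
it, and the left-to-right condition on the link makes the surviving terms carry equal signs. The
pair can be read off from `Mon(T⁺)`, since a sorted row is determined by its content and the link by
the two tableaux. Distinct pairs therefore have distinct leading monomials, so the family is
linearly independent.

For spanning, let `f` be a semi-invariant of a fixed weight with leading exponent `m`. Scaling a
line of variables (all entries in a fixed column of the `M_i`, or in a fixed row) shows that the
exponents of `m` on each line have a sum given by the weight, so that the sorted rows with content
`m` form rectangular tableaux. Adding one line to another fixes `f`, and a two-line argument with
binomial coefficients bounds the exponents from a position `s` on of the greater line by the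
exponents strictly after `s` of the smaller one. This is strictness down the columns, so `m` is the
leading monomial of the semi-invariant of a semi-standard pair of the same weight, and the division
algorithm writes `f` as a combination of such.
-/

open MvPolynomial
open scoped MonomialOrder

section MonomialOrder

variable {σ ι k : Type*} [Field k] (mo : MonomialOrder σ)

theorem linearIndependent_of_injective_degree {F : ι → MvPolynomial σ k} (hF : ∀ i, F i ≠ 0)
    (hinj : Function.Injective fun i => mo.degree (F i)) : LinearIndependent k F := by
  classical
  refine linearIndependent_iff'.2 fun s g hg => by_contra fun hne => ?_
  push Not at hne
  obtain ⟨i₀, hi₀, hgi₀⟩ := hne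
  obtain ⟨j, hj, hmax⟩ := (s.filter (g · ≠ 0)).exists_max_image
    (fun i => mo.toSyn (mo.degree (F i))) ⟨i₀, Finset.mem_filter.2 ⟨hi₀, hgi₀⟩⟩
  rw [Finset.mem_filter] at hj
  have hcoeff := congrArg (coeff (mo.degree (F j))) hg
  rw [coeff_sum, Finset.sum_eq_single_of_mem j hj.1, coeff_smul, coeff_zero] at hcoeff
  · exact mul_ne_zero hj.2 (mo.coeff_degree_ne_zero_iff.2 (hF j)) hcoeff
  · intro i hi hij
    rcases eq_or_ne (g i) 0 with h | h
    · simp [h]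
    · have hlt := lt_of_le_of_ne (hmax i (Finset.mem_filter.2 ⟨hi, h⟩))
        fun h => hij (hinj (mo.toSyn.injective h))
      rw [coeff_smul, mo.coeff_eq_zero_of_lt hlt, smul_zero]

theorem le_span_range_of_degree {F : ι → MvPolynomial σ k} (hF : ∀ i, F i ≠ 0)
    {V : Submodule k (MvPolynomial σ k)}
    (hV : ∀ f ∈ V, f ≠ 0 → ∃ i, F i ∈ V ∧ mo.degree (F i) = mo.degree f) :
    V ≤ Submodule.span k (Set.range F) := by
  suffices ∀ d : mo.syn, ∀ f ∈ V, mo.toSyn (mo.degree f) = d →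
      f ∈ Submodule.span k (Set.range F) from fun f hf => this _ f hf rfl
  intro d
  induction d using WellFoundedLT.induction with
  | ind d ih =>
    rintro f hf rfl
    rcases eq_or_ne f 0 with rfl | hf0
    · exact zero_mem _
    obtain ⟨i, hFV, hdeg⟩ := hV f hf hf0
    set c := mo.leadingCoeff f / mo.leadingCoeff (F i)
    have hFi : F i ∈ Submodule.span k (Set.range F) := Submodule.subset_span ⟨i, rfl⟩
    have hrest : f - c • F i ∈ V := sub_mem hf (V.smul_mem c hFV)
    suffices f - c • F i ∈ Submodule.span k (Set.range F) by
      simpa using add_mem this (Submodule.smul_mem _ c hFi)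
    rcases eq_or_ne (f - c • F i) 0 with h0 | h0
    · rw [h0]; exact zero_mem _
    refine ih _ (lt_of_le_of_ne ?_ fun h => ?_) _ hrest rfl
    · refine mo.degree_sub_le.trans (sup_le le_rfl ?_)
      exact hdeg ▸ mo.degree_smul_le
    · have hlead := mo.leadingCoeff_ne_zero_iff.2 (hF i)
      refine mo.coeff_degree_ne_zero_iff.2 h0 ?_
      rw [mo.toSyn.injective h, coeff_sub, coeff_smul, smul_eq_mul, sub_eq_zero]
      nth_rw 2 [← hdeg]
      exact (div_mul_cancel₀ _ hlead).symm

end MonomialOrder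

section VarLex

variable {K r0 r1 : ℕ}

/-- The indices of the variables, in lexicographic order: the greatest variable has the smallest
index, as in `MonomialOrder.lex`. -/
def varEquivLex (K r0 r1 : ℕ) : KVar K r0 r1 ≃ Fin K ×ₗ Fin r1 ×ₗ Fin r0 :=
  (Equiv.prodCongrRight fun _ => toLex).trans toLex

theorem varEquivLex_lt_iff {v w : KVar K r0 r1} :
    varEquivLex K r0 r1 v < varEquivLex K r0 r1 w ↔ VarGT v w := by
  simp [varEquivLex, VarGT, Prod.Lex.toLex_lt_toLex]

/-- The lexicographic term order on the coordinate ring, as a `MonomialOrder`. -/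
noncomputable def varLex (K r0 r1 : ℕ) : MonomialOrder (KVar K r0 r1) where
  syn := (MonomialOrder.lex : MonomialOrder (Fin K ×ₗ Fin r1 ×ₗ Fin r0)).syn
  toSyn := (Finsupp.domCongr (varEquivLex K r0 r1)).trans
    (MonomialOrder.lex : MonomialOrder (Fin K ×ₗ Fin r1 ×ₗ Fin r0)).toSyn
  toSyn_monotone _ _ hab :=
    (MonomialOrder.lex : MonomialOrder (Fin K ×ₗ Fin r1 ×ₗ Fin r0)).toSyn_monotone fun _ => hab _

theorem varLex_lt_iff {a b : KVar K r0 r1 →₀ ℕ} : a ≺[varLex K r0 r1] b ↔ MonLT a b := by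
  change toLex (Finsupp.domCongr (varEquivLex K r0 r1) a) <
    toLex (Finsupp.domCongr (varEquivLex K r0 r1) b) ↔ _
  simp only [Finsupp.Lex.lt_iff, (varEquivLex K r0 r1).exists_congr_left, MonLT,
    ← varEquivLex_lt_iff, (varEquivLex K r0 r1).forall_congr_left]
  simp [and_comm]

end VarLex

section Rearrangement

variable {B : Type*}

theorem exists_notMem_of_apply_notMem [Finite B] (A : Equiv.Perm B) {s : Set B} {j : B}
    (hj : j ∈ s) (hAj : A j ∉ s) : ∃ j₁, j₁ ∉ s ∧ A j₁ ∈ s := by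
  by_contra! h
  have hmaps : Set.MapsTo A.symm s s := fun b hb => by
    by_contra hb'
    exact h _ hb' (by simpa using hb)
  exact hAj (Equiv.Perm.perm_symm_mapsTo_iff_mapsTo.1 hmaps hj)

/-- A column-strict filling with `r` rows of a set `B` of boxes: the box `b` lies in row `q b` of
column `c b` and carries the label `(i b, p b)`. -/
structure ColumnStrict (r : ℕ) (i q p c : B → ℕ) : Prop where
  row_lt : ∀ b, q b < r
  exists_row : ∀ b t, t < r → ∃ b', c b' = c b ∧ q b' = t
  eq_of_row_eq : ∀ {b b'}, c b = c b' → q b = q b' → b = b'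
  label_lt : ∀ {b b'}, c b = c b' → q b < q b' → i b < i b' ∨ (i b = i b' ∧ p b < p b')

variable {r r0 r1 : ℕ} {i q p c l : B → ℕ}

namespace ColumnStrict

theorem label_fst_le (S : ColumnStrict r i q p c) {b b' : B} (hc : c b = c b')
    (hq : q b ≤ q b') : i b ≤ i b' := by
  rcases hq.lt_or_eq with hq | hq
  · rcases S.label_lt hc hq with h | h <;> omega
  · rw [S.eq_of_row_eq hc hq]

theorem label_snd_add_le (S : ColumnStrict r i q p c) {b b' : B} (hc : c b = c b')
    (hq : q b ≤ q b') (hi : i b = i b') : p b + (q b' - q b) ≤ p b' := by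
  obtain ⟨n, hn⟩ := Nat.exists_eq_add_of_le hq
  induction n generalizing b' with
  | zero => rw [S.eq_of_row_eq hc hn.symm]; omega
  | succ n ih =>
    obtain ⟨d, hdc, hdq⟩ := S.exists_row b (q b + n) (by have := S.row_lt b'; omega)
    have hbd := S.label_fst_le (b := b) (b' := d) hdc.symm (by omega)
    have hdb' := S.label_lt (b := d) (b' := b') (hdc.trans hc) (by omega)
    have := ih (b' := d) hdc.symm (by omega) (by omega) hdq
    omega

end ColumnStrict

/-- The permutations `A` and `R` of the boxes realise the same rearranged labels `(i, q ∘ A, p ∘ R)`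
wherever the predicate `P` holds, either for the rearranged label or for the label found by `A`
or `R`. -/
structure AgreesOn (i q p : B → ℕ) (A R : Equiv.Perm B) (P : ℕ → ℕ → ℕ → Prop) : Prop where
  left : ∀ b, P (i b) (q (A b)) (p (R b)) ∨ P (i (A b)) (q (A b)) (p (A b)) →
    i (A b) = i b ∧ p (A b) = p (R b)
  right : ∀ b, P (i b) (q (A b)) (p (R b)) ∨ P (i (R b)) (q (R b)) (p (R b)) →
    i (R b) = i b ∧ q (R b) = q (A b)

namespace AgreesOn

variable {A R : Equiv.Perm B} {P : ℕ → ℕ → ℕ → Prop}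

theorem swap (h : AgreesOn i q p A R P) : AgreesOn i p q R A fun x y z => P x z y :=
  ⟨h.right, h.left⟩

variable [Finite B]

/-- A box `j₁` of the same column crosses from below row `q w` to above it.  Both of its partners
`A j₁` and `R j₁` agree with it, so the two column gaps between `j₁` and its partners bound each
other, and the labels between them are consecutive. -/
theorem consecutive (h : AgreesOn i q p A R P) (S : ColumnStrict r1 i q p c)
    (T : ColumnStrict r0 i p q l) (hA : ∀ b, c (A b) = c b) (hR : ∀ b, l (R b) = l b)
    {u w j : B} (hu : c u = c j) (hw : c w = c j) (huw : q w = q u + 1)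
    (hP : ∀ x, c x = c j → q x ≤ q u → P (i x) (q x) (p x))
    (hj : q j ≤ q u) (hAj : q w ≤ q (A j)) : i w = i u ∧ p w = p u + 1 := by
  obtain ⟨j₁, hj₁, hc, hq⟩ :=
    exists_notMem_of_apply_notMem A (s := {b | c b = c j ∧ q b < q w}) (j := j)
      ⟨rfl, by omega⟩ (by simp [hAj])
  rw [hA] at hc
  have hqj₁ : q w ≤ q j₁ := by simpa [hc] using hj₁
  have hPd : P (i (A j₁)) (q (A j₁)) (p (A j₁)) := hP _ (by rw [hA, hc]) (by omega)
  obtain ⟨hiA, hpA⟩ := h.left j₁ (Or.inr hPd)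
  obtain ⟨hiR, hqR⟩ := h.right j₁ (Or.inl (by rwa [← hiA, ← hpA]))
  have hAu := S.label_fst_le (b := A j₁) (b' := u) (by rw [hA]; omega) (by omega)
  have huw' := S.label_fst_le (b := u) (b' := w) (by omega) (by omega)
  have hwj := S.label_fst_le (b := w) (b' := j₁) (by omega) (by omega)
  have gap_column := S.label_snd_add_le (hA j₁) (by omega) hiA
  have gap_linked := T.label_snd_add_le (hR j₁) (by omega) hiR
  have gap_Au := S.label_snd_add_le (b := A j₁) (b' := u) (by rw [hA]; omega) (by omega) (by omega)
  have gap_uw := S.label_snd_add_le (b := u) (b' := w) (by omega) (by omega) (by omega)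
  have gap_wj := S.label_snd_add_le (b := w) (b' := j₁) (by omega) (by omega) (by omega)
  omega

theorem consecutive_run (h : AgreesOn i q p A R P) (S : ColumnStrict r1 i q p c)
    (T : ColumnStrict r0 i p q l) (hA : ∀ b, c (A b) = c b) (hR : ∀ b, l (R b) = l b) {b : B}
    (hP : ∀ u x, c u = c b → i u = i b → p u + q b = p b + q u → q u < q (A b) →
      c x = c b → q x ≤ q u → P (i x) (q x) (p x)) {w : B} (hw : c w = c b) (hbw : q b ≤ q w)
    (hwA : q w ≤ q (A b)) : i w = i b ∧ p w + q b = p b + q w := by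
  obtain ⟨n, hn⟩ := Nat.exists_eq_add_of_le hbw
  induction n generalizing w with
  | zero => rw [S.eq_of_row_eq hw hn]; omega
  | succ n ih =>
    obtain ⟨u, hu, huq⟩ := S.exists_row b (q b + n) (by have := S.row_lt w; omega)
    obtain ⟨hui, hup⟩ := ih hu (by omega) (by omega) huq
    have := h.consecutive S T hA hR hu hw (by omega)
      (fun x => hP u x hu hui hup (by omega)) (by omega) hwA
    omega

theorem eq_of_lt (S : ColumnStrict r1 i q p c) (T : ColumnStrict r0 i p q l)
    (hA : ∀ b, c (A b) = c b) (hR : ∀ b, l (R b) = l b) {b : B}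
    (h : AgreesOn i q p A R fun x y z =>
      x < i b ∨ (x = i b ∧ (y < q (A b) ∨ (y = q (A b) ∧ z < p (R b))))) :
    (i (A b) = i b ∧ p (A b) = p (R b)) ∧ i (R b) = i b ∧ q (R b) = q (A b) := by
  have hleft := fun hlt => h.left b (Or.inr hlt)
  have hright := fun hlt => h.right b (Or.inr hlt)
  rcases le_or_gt (q (A b)) (q b) with hq | hq
  · have hi := S.label_fst_le (hA b) hq
    have gap := S.label_snd_add_le (hA b) hq
    have hi' := T.label_fst_le (b := R b) (b' := b) (hR b)
    have gap' := T.label_snd_add_le (b := R b) (b' := b) (hR b)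
    omega
  have hp : p b < p (R b) := by
    by_contra hp
    have hi := T.label_fst_le (hR b) (by omega)
    have gap := T.label_snd_add_le (hR b) (by omega)
    omega
  have run := h.consecutive_run S T hA hR (b := b) (fun u x hu hui _ huA hx hxu => by
    have := S.label_fst_le (hx.trans hu.symm) hxu
    omega) (hA b) hq.le le_rfl
  have run' := h.swap.consecutive_run T S hR hA (b := b) (fun u x hu hui hup huA hx hxu => by
    have := T.label_fst_le (hx.trans hu.symm) hxu
    have := T.label_snd_add_le (hx.trans hu.symm) hxu
    omega) (hR b) hp.le le_rfl
  omega

end AgreesOn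

section Counting

variable [Fintype B] {V : Type*}

theorem sum_single_one_apply [DecidableEq V] (f : B → V) (v : V) :
    (∑ b, Finsupp.single (f b) (1 : ℕ)) v = Finset.card {b | f b = v} := by
  simp [Finsupp.finsetSum_apply, Finsupp.single_apply]

theorem card_filter_comp_perm [DecidableEq V] (A : Equiv.Perm B) (f : B → V) (v : V) :
    Finset.card {b | f (A b) = v} = Finset.card {b | f b = v} :=
  Finset.card_equiv A (by simp)

/-- Going up the well-founded order, the boxes with rearranged value `v` are among those with
`f (A b) = v`; the latter are as many as the boxes with `f b = v`, so if the rearrangement does not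
lose any of these the two sets coincide. -/
theorem comp_perm_eq_of_not_lex_lt {r : V → V → Prop} (hr : WellFounded r) (f g : B → V)
    (A R : Equiv.Perm B)
    (hnot : ¬ ∃ v, (∑ b, Finsupp.single (g b) 1) v < (∑ b, Finsupp.single (f b) 1) v ∧
      ∀ w, r w v → (∑ b, Finsupp.single (g b) 1) w = (∑ b, Finsupp.single (f b) 1) w)
    (hstep : ∀ v, (∀ w, r w v → ∀ b, (g b = w ↔ f (A b) = w) ∧ (g b = w ↔ f (R b) = w)) →
      ∀ b, g b = v → f (A b) = v ∧ f (R b) = v) (b : B) :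
    f (A b) = g b ∧ f (R b) = g b := by
  classical
  simp only [sum_single_one_apply, not_exists, not_and] at hnot
  suffices ∀ v b, (g b = v ↔ f (A b) = v) ∧ (g b = v ↔ f (R b) = v) from
    ⟨(this _ b).1.1 rfl, (this _ b).2.1 rfl⟩
  intro v
  induction v using hr.induction with
  | _ v ih =>
    have hle : Finset.card {b | f b = v} ≤ Finset.card {b | g b = v} := by
      refine not_lt.1 fun hlt => hnot v hlt fun w hw => ?_
      simpa only [(ih w hw _).1] using card_filter_comp_perm A f w
    have filter_eq (C : Equiv.Perm B) (hC : ∀ b, g b = v → f (C b) = v) :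
        Finset.univ.filter (g · = v) = Finset.univ.filter (fun b => f (C b) = v) :=
      Finset.eq_of_subset_of_card_le (Finset.monotone_filter_right _ fun b _ => hC b)
        ((card_filter_comp_perm C f v).trans_le hle)
    have hA := filter_eq A fun b hb => (hstep v ih b hb).1
    have hR := filter_eq R fun b hb => (hstep v ih b hb).2
    simp only [Finset.ext_iff, Finset.mem_filter, Finset.mem_univ, true_and] at hA hR
    exact fun b => ⟨hA b, hR b⟩

end Counting

section Variables

variable {K : ℕ}

theorem wellFounded_varGT : WellFounded (VarGT (K := K) (r0 := r0) (r1 := r1)) := by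
  convert InvImage.wf (varEquivLex K r0 r1) (wellFounded_lt (α := Fin K ×ₗ Fin r1 ×ₗ Fin r0))
  ext v w
  exact varEquivLex_lt_iff.symm

theorem comp_perm_eq_of_not_monLT [Fintype B] {x : B → KVar K r0 r1}
    (S : ColumnStrict r1 (fun b => (x b).1) (fun b => (x b).2.1) (fun b => (x b).2.2) c)
    (T : ColumnStrict r0 (fun b => (x b).1) (fun b => (x b).2.2) (fun b => (x b).2.1) l)
    {A R : Equiv.Perm B} (hA : ∀ b, c (A b) = c b) (hR : ∀ b, l (R b) = l b)
    {y : B → KVar K r0 r1} (hy : ∀ b, y b = ((x b).1, (x (A b)).2.1, (x (R b)).2.2))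
    (hnot : ¬ MonLT (∑ b, Finsupp.single (y b) 1) (∑ b, Finsupp.single (x b) 1)) (b : B) :
    x (A b) = y b ∧ x (R b) = y b := by
  refine comp_perm_eq_of_not_lex_lt wellFounded_varGT x y A R hnot (fun v ih b hb => ?_) b
  subst hb
  have hyA {b'} (h : VarGT (y b') (y b) ∨ VarGT (x (A b')) (y b)) : x (A b') = y b' :=
    h.elim (fun h => (ih _ h b').1.1 rfl) fun h => ((ih _ h b').1.2 rfl).symm
  have hyR {b'} (h : VarGT (y b') (y b) ∨ VarGT (x (R b')) (y b)) : x (R b') = y b' :=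
    h.elim (fun h => (ih _ h b').2.1 rfl) fun h => ((ih _ h b').2.2 rfl).symm
  have agrees : AgreesOn (fun b => (x b).1) (fun b => (x b).2.1) (fun b => (x b).2.2) A R
      fun i q p => i < (x b).1 ∨
        (i = (x b).1 ∧ (q < (x (A b)).2.1 ∨ (q = (x (A b)).2.1 ∧ p < (x (R b)).2.2))) := by
    simp only [VarGT, hy, Prod.ext_iff, Fin.lt_def, Fin.ext_iff] at hyA hyR
    exact ⟨fun b' h => ⟨(hyA h).1, (hyA h).2.2⟩, fun b' h => ⟨(hyR h).1, (hyR h).2.1⟩⟩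
  obtain ⟨⟨hi, hp⟩, hi', hq⟩ := AgreesOn.eq_of_lt S T hA hR agrees
  simp only [hy, Prod.ext_iff, Fin.ext_iff]
  exact ⟨⟨hi, trivial, hp⟩, hi', hq, trivial⟩

end Variables

section Offset

/-- With `e = c - l`, invariance of `c` under `A` and of `l` under `R` gives
`∑ e * (e ∘ A) = ∑ e ^ 2`, the equality case of the Cauchy-Schwarz inequality; so `e ∘ A = e`. -/
theorem sub_comp_perm_eq [Finite B] {A R : Equiv.Perm B} {c l : B → ℤ} (hA : ∀ b, c (A b) = c b)
    (hR : ∀ b, l (R b) = l b) (he : ∀ b, c (A b) - l (A b) = c (R b) - l (R b)) (b : B) :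
    c (A b) - l (A b) = c b - l b := by
  cases nonempty_fintype B
  have cross : ∑ b, (c b - l b) * (c (A b) - l (A b)) = ∑ b, (c b - l b) * (c b - l b) :=
    calc ∑ b, (c b - l b) * (c (A b) - l (A b))
        = ∑ b, (c (A b) * (c (A b) - l (A b)) - l (R b) * (c (R b) - l (R b))) :=
          Finset.sum_congr rfl fun b _ => by rw [← he, hA, hR]; ring
      _ = ∑ b, (c b - l b) * (c b - l b) := by
          rw [Finset.sum_sub_distrib, Equiv.sum_comp A fun b => c b * (c b - l b),
            Equiv.sum_comp R fun b => l b * (c b - l b), ← Finset.sum_sub_distrib]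
          exact Finset.sum_congr rfl fun b _ => by ring
  have square : ∑ b, (c (A b) - l (A b)) * (c (A b) - l (A b)) = ∑ b, (c b - l b) * (c b - l b) :=
    Equiv.sum_comp A fun b => (c b - l b) * (c b - l b)
  have hzero : ∑ b, ((c (A b) - l (A b)) - (c b - l b)) ^ 2 = 0 := by
    calc ∑ b, ((c (A b) - l (A b)) - (c b - l b)) ^ 2
        = ∑ b, ((c (A b) - l (A b)) * (c (A b) - l (A b)) + (c b - l b) * (c b - l b)
            - 2 * ((c b - l b) * (c (A b) - l (A b)))) :=
          Finset.sum_congr rfl fun b _ => by ring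
      _ = 0 := by
          rw [Finset.sum_sub_distrib, Finset.sum_add_distrib, ← Finset.mul_sum, cross, square]
          ring
  have := (Finset.sum_eq_zero_iff_of_nonneg fun _ _ => sq_nonneg _).1 hzero b (Finset.mem_univ b)
  exact sub_eq_zero.1 (pow_eq_zero_iff two_ne_zero |>.1 this)

theorem card_filter_lt_eq_sub {s : Finset B} {f : B → ℕ} (hf : Set.InjOn f s)
    (hfs : (f '' s).OrdConnected) {x y : B} (hx : x ∈ s) (hy : y ∈ s) :
    Finset.card {z ∈ s | ¬ f z < f x ∧ f z < f y} = f y - f x := by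
  rw [← Nat.card_Ico]
  refine Finset.card_nbij f (fun z hz => ?_) (hf.mono fun z hz => ?_) fun n hn => ?_
  · simp only [Finset.coe_filter, Set.mem_ofPred_eq] at hz
    exact Finset.mem_coe.2 (Finset.mem_Ico.2 ⟨not_lt.1 hz.2.1, hz.2.2⟩)
  · exact (Finset.mem_filter.1 hz).1
  · rw [Finset.mem_coe, Finset.mem_Ico] at hn
    obtain ⟨z, hz, rfl⟩ := hfs.out ⟨x, hx, rfl⟩ ⟨y, hy, rfl⟩ ⟨hn.1, hn.2.le⟩
    exact ⟨z, Finset.mem_coe.2 (Finset.mem_filter.2 ⟨hz, hn.1.not_gt, hn.2⟩), rfl⟩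

/-- Both differences count the elements of `s` between `x` and `y`. -/
theorem sub_eq_sub_of_ordConnected {s : Finset B} {f g : B → ℕ} (hf : Set.InjOn f s)
    (hfs : (f '' s).OrdConnected) (hgs : (g '' s).OrdConnected)
    (hfg : ∀ x ∈ s, ∀ y ∈ s, f x < f y → g x < g y) {x y : B} (hx : x ∈ s) (hy : y ∈ s) :
    (g x : ℤ) - f x = g y - f y := by
  wlog h : f x ≤ f y generalizing x y
  · exact (this hy hx (by omega)).symm
  have hiff {x y} (hx : x ∈ s) (hy : y ∈ s) : f x < f y ↔ g x < g y := by
    refine ⟨hfg x hx y hy, fun hg => ?_⟩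
    rcases lt_trichotomy (f x) (f y) with h | h | h
    · exact h
    · exact absurd hg (by rw [hf hx hy h]; exact lt_irrefl _)
    · exact absurd hg (hfg y hy x hx h).not_gt
  have hg : Set.InjOn g s := fun x hx y hy h => hf hx hy <| by
    have hxy := hiff hx hy
    have hyx := hiff hy hx
    omega
  have hcard : f y - f x = g y - g x := by
    rw [← card_filter_lt_eq_sub hf hfs hx hy, ← card_filter_lt_eq_sub hg hgs hx hy]
    exact congrArg _ (Finset.filter_congr fun z hz => by rw [hiff hz hx, hiff hz hy])
  have := hiff hy hx
  omega

end Offset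

end Rearrangement

section LeadingMonomial

variable {K r0 r1 cm cp : ℕ}

namespace LinkedPair

/-- The variable that a box of `T⁻`, or its linked box of `T⁺`, contributes to the monomial of a
linked tableaux pair. -/
def boxVar (L : LinkedPair K r0 r1 cm cp) (b : Fin r0 × Fin cm) : KVar K r0 r1 :=
  ((L.Tm b.1 b.2).1, (L.link b).1, b.1)

variable (L : LinkedPair K r0 r1 cm cp)

theorem Tm_eq_boxVar (b : Fin r0 × Fin cm) :
    L.Tm b.1 b.2 = ((L.boxVar b).1, (L.boxVar b).2.1) :=
  Prod.ext rfl (L.link_row b.1 b.2).symm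

theorem Tp_link_eq_boxVar (b : Fin r0 × Fin cm) :
    L.Tp (L.link b).1 (L.link b).2 = ((L.boxVar b).1, (L.boxVar b).2.2) :=
  L.link_label b.1 b.2

theorem monExpP_eq_sum_boxVar : monExpP L = ∑ b, Finsupp.single (L.boxVar b) 1 := by
  rw [monExpP, ← Fintype.sum_prod_type', ← Equiv.sum_comp L.link]
  exact Finset.sum_congr rfl fun b _ => by rw [Tp_link_eq_boxVar]; rfl

/-- The permutation of the boxes of `T⁻` that corresponds under the link to a column-wise
permutation of the boxes of `T⁺`. -/
def linkPerm (αp : Fin cp → Equiv.Perm (Fin r1)) : Equiv.Perm (Fin r0 × Fin cm) :=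
  (L.link.trans (Equiv.prodCongrLeft αp)).trans L.link.symm

theorem link_linkPerm (αp : Fin cp → Equiv.Perm (Fin r1)) (b : Fin r0 × Fin cm) :
    L.link (L.linkPerm αp b) = (αp (L.link b).2 (L.link b).1, (L.link b).2) := by
  simp [linkPerm, Equiv.prodCongrLeft]

/-- The variable contributed by a box after the column-wise permutations `αm` and `αp`. -/
def permVar (αm : Fin cm → Equiv.Perm (Fin r0)) (αp : Fin cp → Equiv.Perm (Fin r1))
    (b : Fin r0 × Fin cm) : KVar K r0 r1 :=
  ((L.boxVar b).1, αp (L.link b).2 (L.link b).1, αm b.2 b.1)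

theorem pairPoly_eq_sum_prod :
    pairPoly L = ∑ αm : Fin cm → Equiv.Perm (Fin r0), ∑ αp : Fin cp → Equiv.Perm (Fin r1),
      C ((∏ l, ((Equiv.Perm.sign (αm l) : ℤ) : ℂ)) * ∏ c, ((Equiv.Perm.sign (αp c) : ℤ) : ℂ)) *
        ∏ b, X (L.permVar αm αp b) := by
  refine Finset.sum_congr rfl fun αm _ => Finset.sum_congr rfl fun αp _ => ?_
  rw [zsmul_eq_mul, ← Fintype.prod_prod_type' (f := fun p l =>
    (X ((L.Tm p l).1, αp (L.link (p, l)).2 (L.link (p, l)).1, αm l p) : KPoly K r0 r1)),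
    ← map_intCast (C (R := ℂ))]
  push_cast
  rfl

theorem pairPoly_eq_sum_monomial :
    pairPoly L = ∑ αm : Fin cm → Equiv.Perm (Fin r0), ∑ αp : Fin cp → Equiv.Perm (Fin r1),
      monomial (∑ b, Finsupp.single (L.permVar αm αp b) 1)
        ((Equiv.Perm.sign (Equiv.prodCongrLeft αm) * Equiv.Perm.sign (L.linkPerm αp) : ℤ) : ℂ) := by
  rw [pairPoly_eq_sum_prod]
  refine Finset.sum_congr rfl fun αm _ => Finset.sum_congr rfl fun αp _ => ?_
  have sign_linkPerm : Equiv.Perm.sign (L.linkPerm αp) = ∏ c, Equiv.Perm.sign (αp c) := by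
    rw [← Equiv.Perm.sign_prodCongrLeft]
    exact Equiv.Perm.sign_symm_trans_trans (Equiv.prodCongrLeft αp) L.link.symm
  have prod_X : ∏ b, X (L.permVar αm αp b) =
      monomial (∑ b, Finsupp.single (L.permVar αm αp b) 1) (1 : ℂ) :=
    (monomial_sum_one _ _).symm
  rw [prod_X, sign_linkPerm, Equiv.Perm.sign_prodCongrLeft, C_mul_monomial, mul_one]
  push_cast
  rfl

variable {L}

theorem columnStrict_Tp (hL : IsSemiStandardTab L.Tp) :
    ColumnStrict r1 (fun b => (L.boxVar b).1) (fun b => (L.boxVar b).2.1)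
      (fun b => (L.boxVar b).2.2) fun b => (L.link b).2 where
  row_lt b := Fin.is_lt _
  exists_row b t ht := ⟨L.link.symm (⟨t, ht⟩, (L.link b).2), by simp, by simp [boxVar]⟩
  eq_of_row_eq hc hq := L.link.injective (Prod.ext (Fin.ext hq) (Fin.ext hc))
  label_lt {b b'} hc hq := by
    have h := hL.2 (L.link b).2 (L.link b).1 (L.link b').1 hq
    rw [Fin.ext hc, Tp_link_eq_boxVar, ← Fin.ext hc, Tp_link_eq_boxVar] at h
    exact h.imp_right fun h => ⟨congrArg Fin.val h.1, h.2⟩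

theorem columnStrict_Tm (hL : IsSemiStandardTab L.Tm) :
    ColumnStrict r0 (fun b => (L.boxVar b).1) (fun b => (L.boxVar b).2.2)
      (fun b => (L.boxVar b).2.1) fun b => b.2 where
  row_lt b := Fin.is_lt _
  exists_row b t ht := ⟨(⟨t, ht⟩, b.2), by simp, by simp [boxVar]⟩
  eq_of_row_eq hc hq := Prod.ext (Fin.ext hq) (Fin.ext hc)
  label_lt {b b'} hc hq := by
    have h := hL.2 b.2 b.1 b'.1 hq
    rw [Tm_eq_boxVar, Fin.ext hc, Tm_eq_boxVar] at h
    exact h.imp_right fun h => ⟨congrArg Fin.val h.1, h.2⟩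

end LinkedPair

theorem LabelLE.antisymm {n : ℕ} {a b : Fin K × Fin n} (hab : LabelLE a b) (hba : LabelLE b a) :
    a = b := by
  simp only [LabelLE, Fin.lt_def, Fin.le_def, Fin.ext_iff, Prod.ext_iff] at *
  omega

theorem IsSemiStandardTab.eq_of_between {rows cols n : ℕ} {T : Fin rows → Fin cols → Fin K × Fin n}
    (hT : IsSemiStandardTab T) {i : Fin rows} {c d c' : Fin cols} (hcd : c ≤ d) (hdc' : d ≤ c')
    (h : T i c = T i c') : T i d = T i c :=
  LabelLE.antisymm (h ▸ hT.1 i d c' hdc') (hT.1 i c d hcd)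

namespace LinkedPair

variable {L : LinkedPair K r0 r1 cm cp}

theorem boxVar_eq_boxVar_iff_Tm {b b' : Fin r0 × Fin cm} :
    L.boxVar b = L.boxVar b' ↔ b.1 = b'.1 ∧ L.Tm b.1 b.2 = L.Tm b'.1 b'.2 := by
  rw [Tm_eq_boxVar, Tm_eq_boxVar]
  simp only [boxVar, Prod.ext_iff]
  tauto

theorem boxVar_eq_boxVar_iff_Tp {b b' : Fin r0 × Fin cm} :
    L.boxVar b = L.boxVar b' ↔ (L.link b).1 = (L.link b').1 ∧
      L.Tp (L.link b).1 (L.link b).2 = L.Tp (L.link b').1 (L.link b').2 := by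
  rw [Tp_link_eq_boxVar, Tp_link_eq_boxVar]
  simp only [boxVar, Prod.ext_iff]
  tauto

theorem link_snd_sub_eq (hL : IsSemiStandardPair L) {b b' : Fin r0 × Fin cm}
    (h : L.boxVar b = L.boxVar b') :
    ((L.link b).2 : ℤ) - (b.2 : ℕ) = (L.link b').2 - (b'.2 : ℕ) := by
  obtain ⟨hm, hp, hlink⟩ := hL
  refine sub_eq_sub_of_ordConnected (s := {x | L.boxVar x = L.boxVar b'})
    (f := fun b => b.2) (g := fun b => (L.link b).2) ?_ ⟨?_⟩ ⟨?_⟩ ?_ (by simpa) (by simp)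
  all_goals simp only [Finset.coe_filter, Finset.mem_univ, true_and, Finset.mem_filter,
    Set.forall_mem_image, Set.mem_ofPred_eq, Set.InjOn]
  · exact fun x hx y hy hxy => Prod.ext (congrArg (·.2.2) (hx.trans hy.symm)) (Fin.ext hxy)
  · intro x hx y hy z hz
    obtain ⟨hrow, hxy⟩ := boxVar_eq_boxVar_iff_Tm.1 (hx.trans hy.symm)
    have hzc : z < cm := hz.2.trans_lt y.2.isLt
    have hTm : L.Tm x.1 ⟨z, hzc⟩ = L.Tm x.1 x.2 :=
      hm.eq_of_between (c' := y.2) hz.1 hz.2 (by rw [hxy, hrow])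
    have hbox : L.boxVar (x.1, ⟨z, hzc⟩) = L.boxVar x :=
      boxVar_eq_boxVar_iff_Tm.2 ⟨rfl, hTm⟩
    exact ⟨(x.1, ⟨z, hzc⟩), hbox.trans hx, rfl⟩
  · intro x hx y hy z hz
    obtain ⟨hrow, hxy⟩ := boxVar_eq_boxVar_iff_Tp.1 (hx.trans hy.symm)
    have hzc : z < cp := hz.2.trans_lt (L.link y).2.isLt
    have hTp : L.Tp (L.link x).1 ⟨z, hzc⟩ = L.Tp (L.link x).1 (L.link x).2 :=
      hp.eq_of_between (c' := (L.link y).2) hz.1 hz.2 (by rw [hxy, hrow])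
    refine ⟨L.link.symm ((L.link x).1, ⟨z, hzc⟩), (boxVar_eq_boxVar_iff_Tp.2 ?_).trans hx, by simp⟩
    simpa only [Equiv.apply_symm_apply, true_and] using hTp
  · intro x hx y hy hxy
    obtain ⟨hrow, hTm⟩ := boxVar_eq_boxVar_iff_Tm.1 (hx.trans hy.symm)
    have := hlink x.1 x.2 y.2 (hTm.trans (by rw [hrow])) hxy
    rwa [show (x.1, y.2) = y from Prod.ext hrow rfl] at this

theorem linkPerm_eq_prodCongrLeft (hL : IsSemiStandardPair L)
    {αm : Fin cm → Equiv.Perm (Fin r0)} {αp : Fin cp → Equiv.Perm (Fin r1)}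
    (hnot : ¬ MonLT (∑ b, Finsupp.single (L.permVar αm αp b) 1) (monExpP L)) :
    L.linkPerm αp = Equiv.prodCongrLeft αm ∧
      ∀ b, L.boxVar (L.linkPerm αp b) = L.permVar αm αp b := by
  set A := L.linkPerm αp
  set R : Equiv.Perm (Fin r0 × Fin cm) := Equiv.prodCongrLeft αm
  have hA b : (L.link (A b)).2 = (L.link b).2 := by rw [link_linkPerm]
  have hR b : (R b).2 = b.2 := rfl
  have hy b : L.permVar αm αp b = ((L.boxVar b).1, (L.boxVar (A b)).2.1, (L.boxVar (R b)).2.2) := by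
    simp only [boxVar, A, link_linkPerm]
    rfl
  rw [monExpP_eq_sum_boxVar] at hnot
  have key := comp_perm_eq_of_not_monLT (columnStrict_Tp hL.2.1) (columnStrict_Tm hL.1)
    (fun b => congrArg Fin.val (hA b)) (fun b => congrArg Fin.val (hR b)) hy hnot
  have offset b := link_snd_sub_eq hL ((key b).1.trans (key b).2.symm)
  have hsub := sub_comp_perm_eq (c := fun b => (L.link b).2) (l := fun b => (b.2 : ℕ))
    (fun b => by rw [hA]) (fun b => by rw [hR]) offset
  refine ⟨Equiv.ext fun b => ?_, fun b => (key b).1⟩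
  refine Prod.ext (congrArg (·.2.2) ((key b).1.trans (key b).2.symm)) (Fin.ext ?_)
  have := hsub b
  rw [hA] at this
  rw [hR]
  omega

theorem permVar_one (b : Fin r0 × Fin cm) : L.permVar 1 1 b = L.boxVar b := rfl

theorem coeff_pairPoly_eq_zero (hL : IsSemiStandardPair L) {m : KVar K r0 r1 →₀ ℕ}
    (hm : m ≠ monExpP L) (hlt : ¬ MonLT m (monExpP L)) : (pairPoly L).coeff m = 0 := by
  simp only [pairPoly_eq_sum_monomial, coeff_sum, coeff_monomial]
  refine Finset.sum_eq_zero fun αm _ => Finset.sum_eq_zero fun αp _ => if_neg ?_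
  rintro rfl
  refine hm ?_
  simp only [← (linkPerm_eq_prodCongrLeft hL hlt).2, monExpP_eq_sum_boxVar]
  exact Equiv.sum_comp (L.linkPerm αp) fun b => Finsupp.single (L.boxVar b) 1

theorem coeff_monExpP_pairPoly (hL : IsSemiStandardPair L) :
    (pairPoly L).coeff (monExpP L) = Finset.card {α : (Fin cm → Equiv.Perm (Fin r0)) ×
      (Fin cp → Equiv.Perm (Fin r1)) |
        ∑ b, Finsupp.single (L.permVar α.1 α.2 b) 1 = monExpP L} := by
  simp only [pairPoly_eq_sum_monomial, coeff_sum, coeff_monomial, ← Fintype.sum_prod_type',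
    Finset.card_filter, Nat.cast_sum]
  refine Finset.sum_congr rfl fun α _ => ?_
  split_ifs with h
  · have hlt : ¬ MonLT (monExpP L) (monExpP L) := fun ⟨_, hv, _⟩ => hv.false
    rw [(linkPerm_eq_prodCongrLeft hL (by rwa [h])).1, ← Units.val_mul, Int.units_mul_self]
    simp
  · simp

theorem coeff_monExpP_pairPoly_ne_zero (hL : IsSemiStandardPair L) :
    (pairPoly L).coeff (monExpP L) ≠ 0 := by
  rw [coeff_monExpP_pairPoly hL, Nat.cast_ne_zero, Finset.card_ne_zero]
  exact ⟨1, by simp [permVar_one, monExpP_eq_sum_boxVar]⟩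

theorem pairPoly_ne_zero (hL : IsSemiStandardPair L) : pairPoly L ≠ 0 := fun h =>
  coeff_monExpP_pairPoly_ne_zero hL (by rw [h, coeff_zero])

theorem degree_pairPoly (hL : IsSemiStandardPair L) :
    (varLex K r0 r1).degree (pairPoly L) = monExpP L := by
  refine (varLex K r0 r1).toSyn.injective (le_antisymm ?_ ?_)
  · refine (varLex K r0 r1).degree_le_iff.2 fun m hm => le_of_not_gt fun hlt => ?_
    refine mem_support_iff.1 hm (coeff_pairPoly_eq_zero hL ?_ fun h => ?_)
    · rintro rfl
      exact hlt.false
    · exact hlt.asymm (varLex_lt_iff.2 h)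
  · exact (varLex K r0 r1).le_degree (mem_support_iff.2 (coeff_monExpP_pairPoly_ne_zero hL))

end LinkedPair

end LeadingMonomial

section SemiInvariance

section TableauDet

variable {R : Type*} [CommRing R] {n c : ℕ}

/-- The product of the maximal minors of `N` whose columns are selected by the columns of the
tableau `J`. -/
def tableauDet (N : Matrix (Fin n) (Fin n) R) (J : Fin n × Fin c → Fin n) : R :=
  ∏ l, (N.submatrix id fun t => J (t, l)).det

theorem tableauDet_eq_sum (N : Matrix (Fin n) (Fin n) R) (J : Fin n × Fin c → Fin n) :
    tableauDet N J = ∑ α : Fin c → Equiv.Perm (Fin n),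
      (∏ l, ((Equiv.Perm.sign (α l) : ℤ) : R)) * ∏ b : Fin n × Fin c, N (α b.2 b.1) (J b) := by
  simp only [tableauDet, Matrix.det_apply', Finset.prod_univ_sum, Fintype.piFinset_univ,
    Finset.prod_mul_distrib, Fintype.prod_prod_type_right, Matrix.submatrix_apply, id]

theorem tableauDet_eq_det_pow_mul (N : Matrix (Fin n) (Fin n) R) (J : Fin n × Fin c → Fin n) :
    tableauDet N J = N.det ^ c * tableauDet 1 J := by
  have det_submatrix l : (N.submatrix id fun t => J (t, l)).det =
      N.det * ((1 : Matrix (Fin n) (Fin n) R).submatrix id fun t => J (t, l)).det := by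
    rw [← Matrix.det_mul]
    congr 1
    ext
    simp [Matrix.mul_apply, Matrix.one_apply]
  simp only [tableauDet, det_submatrix, Finset.prod_mul_distrib, Finset.prod_const,
    Finset.card_univ, Fintype.card_fin]

end TableauDet

variable {K r0 r1 cm cp : ℕ}

theorem glAct_X (g : Matrix (Fin r0) (Fin r0) ℂ) (h : Matrix (Fin r1) (Fin r1) ℂ)
    (v : KVar K r0 r1) :
    glAct g h (X v) = ∑ u : Fin r1 × Fin r0, C (h⁻¹ v.2.1 u.1 * g u.2 v.2.2) * X (v.1, u) := by
  rw [glAct, aeval_X, Fintype.sum_prod_type]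

theorem glAct_one (f : KPoly K r0 r1) : glAct 1 1 f = f := by
  suffices (glAct 1 1 : KPoly K r0 r1 →ₐ[ℂ] KPoly K r0 r1) = AlgHom.id ℂ _ by rw [this]; rfl
  refine algHom_ext fun v => ?_
  rw [glAct_X, Fintype.sum_eq_single v.2 fun u hu => ?_]
  · simp
  · have : v.2.1 ≠ u.1 ∨ u.2 ≠ v.2.2 := by
      contrapose! hu
      exact Prod.ext hu.1.symm hu.2
    rcases this with h | h <;> simp [Matrix.one_apply_ne h]

namespace LinkedPair

variable (L : LinkedPair K r0 r1 cm cp)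

theorem glAct_prod_X_permVar (g : Matrix (Fin r0) (Fin r0) ℂ) (h : Matrix (Fin r1) (Fin r1) ℂ)
    (αm : Fin cm → Equiv.Perm (Fin r0)) (αp : Fin cp → Equiv.Perm (Fin r1)) :
    glAct g h (∏ b, X (L.permVar αm αp b)) = ∑ F : Fin r0 × Fin cm → Fin r1 × Fin r0,
      C ((∏ b, g.transpose (αm b.2 b.1) (F b).2) *
        ∏ b, h⁻¹ (αp b.2 b.1) (F (L.link.symm b)).1) *
        ∏ b, X ((L.boxVar b).1, F b) := by
  simp only [map_prod, glAct_X, Finset.prod_univ_sum, Fintype.piFinset_univ]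
  refine Finset.sum_congr rfl fun F _ => ?_
  rw [Finset.prod_mul_distrib, ← map_prod, Finset.prod_mul_distrib, mul_comm (∏ b, g.transpose _ _),
    ← Equiv.prod_comp L.link fun b => h⁻¹ (αp b.2 b.1) (F (L.link.symm b)).1]
  simp only [Equiv.symm_apply_apply, Matrix.transpose_apply, permVar]

/-- The coefficients of the translate depend on `g` and `h` through products of minors only, which
makes its semi-invariance visible. -/
theorem glAct_pairPoly (g : Matrix (Fin r0) (Fin r0) ℂ) (h : Matrix (Fin r1) (Fin r1) ℂ) :
    glAct g h (pairPoly L) = ∑ F : Fin r0 × Fin cm → Fin r1 × Fin r0,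
      C (tableauDet g.transpose (fun b => (F b).2) *
        tableauDet h⁻¹ fun b => (F (L.link.symm b)).1) * ∏ b, X ((L.boxVar b).1, F b) := by
  simp only [pairPoly_eq_sum_prod, map_sum, map_mul (glAct g h), algHom_C, algebraMap_eq,
    glAct_prod_X_permVar, Finset.mul_sum]
  simp only [tableauDet_eq_sum, Finset.mul_sum, map_sum, Finset.sum_mul]
  rw [Finset.sum_comm, Finset.sum_congr rfl fun αp _ => Finset.sum_comm, Finset.sum_comm]
  refine Finset.sum_congr rfl fun F _ => Finset.sum_congr rfl fun αp _ =>
    Finset.sum_congr rfl fun αm _ => ?_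
  rw [← mul_assoc, ← C_mul, mul_mul_mul_comm]

theorem isSemiInvariant_pairPoly : IsSemiInvariant (pairPoly L) cm (-cp) := by
  intro g h _ _
  conv_rhs => rw [← glAct_one (pairPoly L)]
  rw [glAct_pairPoly, glAct_pairPoly, Finset.mul_sum]
  refine Finset.sum_congr rfl fun F _ => ?_
  rw [← mul_assoc, ← C_mul, tableauDet_eq_det_pow_mul g.transpose, tableauDet_eq_det_pow_mul h⁻¹,
    Matrix.det_transpose, Matrix.transpose_one, inv_one, Matrix.det_nonsing_inv, zpow_neg,
    zpow_natCast, zpow_natCast, Ring.inverse_eq_inv', inv_pow, mul_mul_mul_comm]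

end LinkedPair

/-- The semi-invariants of a fixed weight. -/
noncomputable def weightSpace (K r0 r1 : ℕ) (w0 w1 : ℤ) : Submodule ℂ (KPoly K r0 r1) where
  carrier := {f | IsSemiInvariant f w0 w1}
  add_mem' hf hf' g h hg hh := by rw [map_add, hf g h hg hh, hf' g h hg hh, mul_add]
  zero_mem' _ _ _ _ := by simp
  smul_mem' z f hf g h hg hh := by rw [map_smul, hf g h hg hh, mul_smul_comm]

end SemiInvariance

section TwoLine

variable {k ρ ι : Type*}

section Coefficients

variable [CommRing k] [Fintype ρ]

theorem coeff_prod_X_add_one_pow (e : ρ → ℕ) (d : ρ →₀ ℕ) :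
    coeff d (∏ r, (X r + 1 : MvPolynomial ρ k) ^ e r) = ∏ r, ((e r).choose (d r) : k) := by
  classical
  have expand : ∏ r, (X r + 1 : MvPolynomial ρ k) ^ e r =
      ∑ j ∈ Fintype.piFinset fun r => Finset.range (e r + 1),
        monomial (Finsupp.equivFunOnFinite.symm j) (∏ r, ((e r).choose (j r) : k)) := by
    simp only [add_pow, one_pow, mul_one, Finset.prod_univ_sum, Finset.prod_mul_distrib]
    refine Finset.sum_congr rfl fun j _ => ?_
    rw [monomial_eq, Finsupp.prod_fintype _ _ fun _ => pow_zero _, mul_comm, map_prod]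
    simp
  rw [expand, coeff_sum, Finset.sum_eq_single (d : ρ → ℕ)]
  · simp
  · intro j _ hj
    rw [coeff_monomial, if_neg]
    rintro rfl
    exact hj rfl
  · intro hd
    simp only [Fintype.mem_piFinset, Finset.mem_range, not_forall, not_lt] at hd
    obtain ⟨r, hr⟩ := hd
    rw [Finset.prod_eq_zero (Finset.mem_univ r) (by simp [Nat.choose_eq_zero_of_lt hr]),
      monomial_zero, coeff_zero]

variable [IsDomain k] [Infinite k] {S : Finset ι} {u v : ι → k} {e : ι → ρ → ℕ}

theorem sum_filter_eq_of_forall_sum_mul_prod_pow_eq [DecidableEq (ρ → ℕ)]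
    (h : ∀ Z : ρ → k, ∑ i ∈ S, u i * ∏ r, Z r ^ e i r = ∑ i ∈ S, v i * ∏ r, Z r ^ e i r)
    (d : ρ → ℕ) : ∑ i ∈ S with e i = d, u i = ∑ i ∈ S with e i = d, v i := by
  have poly : ∑ i ∈ S, monomial (Finsupp.equivFunOnFinite.symm (e i)) (u i) =
      ∑ i ∈ S, monomial (Finsupp.equivFunOnFinite.symm (e i)) (v i) := by
    refine MvPolynomial.funext fun Z => ?_
    simpa [eval_monomial, Finsupp.prod_fintype] using h Z
  classical
  have := congrArg (coeff (Finsupp.equivFunOnFinite.symm d)) poly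
  simp only [coeff_sum, coeff_monomial, Equiv.apply_eq_iff_eq] at this
  rw [Finset.sum_filter, Finset.sum_filter]
  convert this

theorem eq_zero_of_forall_sum_mul_prod_pow_eq_zero (he : Set.InjOn e S)
    (h : ∀ Z : ρ → k, ∑ i ∈ S, v i * ∏ r, Z r ^ e i r = 0) {i : ι} (hi : i ∈ S) : v i = 0 := by
  classical
  have := sum_filter_eq_of_forall_sum_mul_prod_pow_eq (u := v) (v := 0) (e := e)
    (by simpa using h) (e i)
  simp only [Finset.sum_filter, Pi.zero_apply, Finset.sum_const_zero] at this
  rwa [Finset.sum_eq_single_of_mem i hi fun j hj hji => if_neg fun h => hji (he hj hi h),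
    if_pos rfl] at this

theorem sum_filter_eq_of_shift_eq [DecidableEq (ρ → ℕ)] {d : ρ → ℕ}
    (hd : ∀ i ∈ S, d ≤ e i → e i = d)
    (h : ∀ Z : ρ → k, ∑ i ∈ S, u i * ∏ r, (Z r + 1) ^ e i r =
      ∑ i ∈ S, v i * ∏ r, Z r ^ e i r) : ∑ i ∈ S with e i = d, u i = ∑ i ∈ S with e i = d, v i := by
  have poly : ∑ i ∈ S, C (u i) * ∏ r, (X r + 1) ^ e i r =
      ∑ i ∈ S, monomial (Finsupp.equivFunOnFinite.symm (e i)) (v i) := by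
    refine MvPolynomial.funext fun Z => ?_
    simpa [eval_monomial, Finsupp.prod_fintype] using h Z
  have choose_eq i (hi : i ∈ S) :
      ∏ r, ((e i r).choose (d r) : k) = if e i = d then 1 else 0 := by
    split_ifs with h
    · simp [h]
    · obtain ⟨r, hr⟩ : ∃ r, e i r < d r := by
        by_contra! hle
        exact h (hd i hi hle)
      exact Finset.prod_eq_zero (Finset.mem_univ r) (by simp [Nat.choose_eq_zero_of_lt hr])
  classical
  have := congrArg (coeff (Finsupp.equivFunOnFinite.symm d)) poly
  simp only [coeff_sum, coeff_C_mul, coeff_prod_X_add_one_pow, coeff_monomial,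
    Equiv.apply_eq_iff_eq, Finsupp.equivFunOnFinite_symm_apply_apply] at this
  rw [Finset.sum_filter, Finset.sum_filter, ← this]
  exact Finset.sum_congr rfl fun i hi => by rw [choose_eq i hi, mul_ite, mul_one, mul_zero]

theorem sum_mul_prod_eq_zero_of_shear_eq {a b : ι → ρ → ℕ} {N : ℕ}
    (hN : ∀ i ∈ S, N ≤ ∑ r, a i r) (hu : ∀ i ∈ S, u i ≠ 0 → ∑ r, b i r < N)
    (h : ∀ X Y : ρ → k, ∑ i ∈ S, u i * ∏ r, (X r + Y r) ^ a i r * Y r ^ b i r =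
      ∑ i ∈ S, v i * ∏ r, X r ^ a i r * Y r ^ b i r) (X Y : ρ → k) :
    ∑ i ∈ S, v i * ∏ r, X r ^ a i r * Y r ^ b i r = 0 := by
  -- Replacing `(X, Y)` by `(ε X, Y + X - ε X)` gives an identity `p ε = q ε` in which `p` has
  -- degree less than `N` while `ε ^ N` divides `q`.
  let y r : Polynomial k := Polynomial.C (Y r + X r) - Polynomial.C (X r) * Polynomial.X
  let p : Polynomial k := ∑ i ∈ S, Polynomial.C (u i) *
    ∏ r, Polynomial.C (Y r + X r) ^ a i r * y r ^ b i r
  let q : Polynomial k := ∑ i ∈ S, Polynomial.C (v i) *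
    ∏ r, (Polynomial.C (X r) * Polynomial.X) ^ a i r * y r ^ b i r
  have hpq : p = q := Polynomial.funext fun ε => by
    simpa [p, q, y, Polynomial.eval_finsetSum, Polynomial.eval_prod] using
      h (fun r => X r * ε) fun r => Y r + X r - X r * ε
  have hp : p.degree < N := by
    refine Polynomial.mem_degreeLT.1 (Submodule.sum_mem _ fun i hi => Polynomial.mem_degreeLT.2 ?_)
    rcases eq_or_ne (u i) 0 with h0 | h0
    · simp [h0]
    have natDegree_y r : (y r).natDegree ≤ 1 := by simp only [y]; compute_degree
    refine Polynomial.degree_le_natDegree.trans_lt (Nat.cast_lt.2 (lt_of_le_of_lt ?_ (hu i hi h0)))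
    refine (Polynomial.natDegree_C_mul_le _ _).trans ((Polynomial.natDegree_prod_le _ _).trans ?_)
    refine Finset.sum_le_sum fun r _ => ?_
    rw [← Polynomial.C_pow]
    exact (Polynomial.natDegree_C_mul_le _ _).trans
      (by simpa using Polynomial.natDegree_pow_le_of_le (b i r) (natDegree_y r))
  have hq : Polynomial.X ^ N ∣ q := by
    refine Finset.dvd_sum fun i hi => Dvd.dvd.mul_left ?_ _
    simp only [mul_pow, Finset.prod_mul_distrib, Finset.prod_pow_eq_pow_sum, mul_assoc]
    rw [mul_left_comm]
    exact (pow_dvd_pow _ (hN i hi)).mul_right _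
  have hq0 : q = 0 := Polynomial.eq_zero_of_dvd_of_degree_lt hq (by simpa [← hpq] using hp)
  simpa [q, y, Polynomial.eval_finsetSum, Polynomial.eval_prod] using
    congrArg (Polynomial.eval 1) hq0

theorem exists_le_sum_of_shear_eq {a b : ι → ρ → ℕ}
    (hab : Set.InjOn (fun i => (a i, b i)) S) {N : ℕ} (hN : ∀ i ∈ S, N ≤ ∑ r, a i r)
    (h : ∀ X Y : ρ → k, ∑ i ∈ S, u i * ∏ r, (X r + Y r) ^ a i r * Y r ^ b i r =
      ∑ i ∈ S, v i * ∏ r, X r ^ a i r * Y r ^ b i r)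
    {m : ι} (hm : m ∈ S) (hv : v m ≠ 0) : ∃ i ∈ S, u i ≠ 0 ∧ N ≤ ∑ r, b i r := by
  by_contra! hlt
  refine hv (eq_zero_of_forall_sum_mul_prod_pow_eq_zero (e := fun i => Sum.elim (a i) (b i))
    (fun i hi j hj hij => hab hi hj ?_) (fun Z => ?_) hm)
  · exact Prod.ext (funext fun r => congrFun hij (.inl r)) (funext fun r => congrFun hij (.inr r))
  · simpa [Fintype.prod_sum_type, Finset.prod_mul_distrib] using
      sum_mul_prod_eq_zero_of_shear_eq hN hlt h (Z ∘ .inl) (Z ∘ .inr)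

end Coefficients

variable [Fintype ρ] [LinearOrder ρ]

@[to_additive]
theorem prod_filter_le_eq {M : Type*} [CommMonoid M] (f : ρ → M) (s : ρ) :
    ∏ r with s ≤ r, f r = f s * ∏ r : {r // s < r}, f r := by
  rw [← Finset.mul_prod_erase _ _ (show s ∈ Finset.univ.filter (s ≤ ·) by simp)]
  exact congrArg _ (Finset.prod_subtype _ (by simp [lt_iff_le_and_ne, and_comm, eq_comm]) f)

@[to_additive]
theorem prod_eq_prod_lt_mul_prod_gt {M : Type*} [CommMonoid M] (f : ρ → M) (s : ρ) :
    ∏ r, f r = (∏ r : {r // r < s}, f r) * (f s * ∏ r : {r // s < r}, f r) := by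
  rw [← Finset.prod_filter_mul_prod_filter_not Finset.univ (· < s), ← prod_filter_le_eq]
  simp only [not_lt]
  exact congrArg (· * _) (Finset.prod_subtype _ (by simp) f)

theorem add_sum_gt_eq_of_eq_before {f g : ρ → ℕ} {s : ρ} (h : ∀ r < s, f r = g r)
    (hsum : ∑ r, f r = ∑ r, g r) :
    f s + ∑ r : {r // s < r}, f r = g s + ∑ r : {r // s < r}, g r := by
  rw [sum_eq_sum_lt_add_sum_gt _ s, sum_eq_sum_lt_add_sum_gt g s,
    Fintype.sum_congr _ _ fun r : {r // r < s} => h r r.2] at hsum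
  exact add_left_cancel hsum

theorem eq_of_forall_ne_of_sum_eq {f g : ρ → ℕ} (s : ρ) (h : ∀ r ≠ s, f r = g r)
    (hsum : ∑ r, f r = ∑ r, g r) : f = g := by
  funext r
  rcases eq_or_ne r s with rfl | hr
  · rw [Fintype.sum_eq_add_sum_compl r, Fintype.sum_eq_add_sum_compl r g,
      Finset.sum_congr rfl fun r' hr' => h r' (by simpa using hr')] at hsum
    exact add_right_cancel hsum
  · exact h r hr

section Shear

variable [CommRing k] [IsDomain k] [Infinite k] {S : Finset ι} {c : ι → k} {a b : ι → ρ → ℕ}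
  {m : ι}

theorem shear_eq_of_lex (hlex : ∀ i ∈ S, ∀ s, (∀ r < s, a i r = a m r) → a i s ≤ a m s)
    (h : ∀ X Y : ρ → k, ∑ i ∈ S, c i * ∏ r, (X r + Y r) ^ a i r * Y r ^ b i r =
      ∑ i ∈ S, c i * ∏ r, X r ^ a i r * Y r ^ b i r) (s : ρ) (X Y : {r // s < r} → k) :
    ∑ i ∈ S with (fun r : {r // r < s} => a i r) = fun r : {r // r < s} => a m r,
        c i * 0 ^ a i s * ∏ r, (X r + Y r) ^ a i r * Y r ^ b i r =
      ∑ i ∈ S with (fun r : {r // r < s} => a i r) = fun r : {r // r < s} => a m r,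
        c i * (-1) ^ a i s * ∏ r, X r ^ a i r * Y r ^ b i r := by
  refine sum_filter_eq_of_shift_eq (e := fun i (r : {r // r < s}) => a i r)
    (fun i hi hle => ?_) fun Z => ?_
  · funext ⟨r, hr⟩
    induction r using WellFoundedLT.induction with
    | _ r ih =>
      exact (hlex i hi r fun r' h => ih r' h (h.trans hr)).antisymm (hle ⟨r, hr⟩)
  · -- At `s` put `X = -1`, `Y = 1`, so that only terms with `a i s = 0` survive on the left.
    let extend (x : {r // r < s} → k) (y : k) (z : {r // s < r} → k) (r : ρ) : k :=
      if h : r < s then x ⟨r, h⟩ else if h : s < r then z ⟨r, h⟩ else y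
    have := h (extend Z (-1) X) (extend 1 1 Y)
    have extend_lt x y z (r : {r // r < s}) : extend x y z r = x r := by simp [extend, r.2]
    have extend_self x y z : extend x y z s = y := by simp [extend]
    have extend_gt x y z (r : {r // s < r}) : extend x y z r = z r := by
      simp [extend, r.2, r.2.le]
    simp only [prod_eq_prod_lt_mul_prod_gt _ s, extend_lt, extend_self, extend_gt] at this
    convert this using 2 with i _ i _ <;> simp <;> ring

theorem sum_ge_le_sum_gt_of_shear_eq (hm : m ∈ S) (hc : c m ≠ 0) (ha : Set.InjOn a S)
    (hab : ∀ i ∈ S, a i + b i = a m + b m) (hsum : ∀ i ∈ S, ∑ r, a i r = ∑ r, a m r)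
    (hlex : ∀ i ∈ S, ∀ s, (∀ r < s, a i r = a m r) → a i s ≤ a m s)
    (h : ∀ X Y : ρ → k, ∑ i ∈ S, c i * ∏ r, (X r + Y r) ^ a i r * Y r ^ b i r =
      ∑ i ∈ S, c i * ∏ r, X r ^ a i r * Y r ^ b i r) (s : ρ) :
    ∑ r with s ≤ r, a m r ≤ ∑ r with s < r, b m r := by
  have eq_before {i : ι} (hi : i ∈ S.filter fun i => (fun r : {r // r < s} => a i r) =
      fun r : {r // r < s} => a m r) : i ∈ S ∧ ∀ r < s, a i r = a m r :=
    ⟨(Finset.mem_filter.1 hi).1, fun r hr => congrFun (Finset.mem_filter.1 hi).2 ⟨r, hr⟩⟩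
  have sum_after {i : ι} (hi : i ∈ S) (h : ∀ r < s, a i r = a m r) :
      a i s + ∑ r : {r // s < r}, a i r = a m s + ∑ r : {r // s < r}, a m r :=
    add_sum_gt_eq_of_eq_before h (hsum i hi)
  obtain ⟨i, hi, hci, hN⟩ := exists_le_sum_of_shear_eq
    (a := fun i (r : {r // s < r}) => a i r) (b := fun i (r : {r // s < r}) => b i r)
    (N := ∑ r : {r // s < r}, a m r)
    (fun i hi j hj hij => by
      obtain ⟨⟨hi, eqi⟩, hj, eqj⟩ := And.intro (eq_before hi) (eq_before hj)
      refine ha hi hj (eq_of_forall_ne_of_sum_eq s (fun r hr => ?_) ((hsum i hi).trans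
        (hsum j hj).symm))
      rcases hr.lt_or_gt with hr | hr
      exacts [(eqi r hr).trans (eqj r hr).symm, congrFun (Prod.ext_iff.1 hij).1 ⟨r, hr⟩])
    (fun i hi => by
      obtain ⟨hi, eqi⟩ := eq_before hi
      have := sum_after hi eqi
      have := hlex i hi s eqi
      omega)
    (shear_eq_of_lex hlex h s) (Finset.mem_filter.2 ⟨hm, rfl⟩)
    (mul_ne_zero hc (pow_ne_zero _ (neg_ne_zero.2 one_ne_zero)))
  obtain ⟨hi, eqi⟩ := eq_before hi
  have his : a i s = 0 := by
    by_contra h0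
    simp [h0] at hci
  have sum_a := sum_after hi eqi
  have sum_ab : ∑ r : {r // s < r}, a i r + ∑ r : {r // s < r}, b i r =
      ∑ r : {r // s < r}, a m r + ∑ r : {r // s < r}, b m r := by
    simp only [← Finset.sum_add_distrib]
    exact Fintype.sum_congr _ _ fun r => congrFun (hab i hi) r
  rw [sum_filter_le_eq, Finset.sum_subtype (p := (s < ·)) _ (by simp)]
  omega

end Shear

end TwoLine

section Substitution

variable {k V ρ : Type*} [CommRing k] {f : MvPolynomial V k}
  {x y : ρ → V}

theorem eval_comp_mul [Fintype V] (f : MvPolynomial V k) (π : V → V) (Z M : V → k) :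
    eval (Z ∘ π * M) f =
      ∑ i ∈ f.support, (coeff i f * ∏ v, M v ^ i v) * ∏ v, Z v ^ i.mapDomain π v := by
  rw [eval_eq']
  refine Finset.sum_congr rfl fun i _ => ?_
  have : ∏ v, Z (π v) ^ i v = ∏ v, Z v ^ i.mapDomain π v := by
    rw [← Finsupp.prod_fintype _ (Z · ^ ·) fun _ => pow_zero _,
      Finsupp.prod_mapDomain_index (fun _ => pow_zero _) fun _ _ _ => pow_add _ _ _,
      Finsupp.prod_fintype _ _ fun _ => pow_zero _]
  simp only [Pi.mul_apply, Function.comp_apply, mul_pow, Finset.prod_mul_distrib, this]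
  ring

theorem sum_filter_mapDomain_eq_of_eval_shear_eq [IsDomain k] [Infinite k] [Fintype V]
    [DecidableEq V] (hx : Function.Injective x)
    (hf : ∀ M : V → k, eval (M + Function.extend x (M ∘ y) 0) f = eval M f)
    {π : V → V} (hπ : π ∘ y = π ∘ x) (d : V →₀ ℕ) (M : V → k) :
    ∑ i ∈ f.support with i.mapDomain π = d,
        coeff i f * ∏ v, (M + Function.extend x (M ∘ y) 0) v ^ i v =
      ∑ i ∈ f.support with i.mapDomain π = d, coeff i f * ∏ v, M v ^ i v := by
  have shear_mul (Z : V → k) : Z ∘ π * M + Function.extend x ((Z ∘ π * M) ∘ y) 0 =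
      Z ∘ π * (M + Function.extend x (M ∘ y) 0) := by
    funext v
    by_cases hv : ∃ r, x r = v
    · obtain ⟨r, rfl⟩ := hv
      have : π (y r) = π (x r) := congrFun hπ r
      simp [hx.extend_apply, this, mul_add]
    · simp [Function.extend_apply' _ _ _ hv]
  have := sum_filter_eq_of_forall_sum_mul_prod_pow_eq (S := f.support)
    (u := fun i => coeff i f * ∏ v, (M + Function.extend x (M ∘ y) 0) v ^ i v)
    (v := fun i => coeff i f * ∏ v, M v ^ i v) (e := fun i : V →₀ ℕ => ⇑(i.mapDomain π))
    (fun Z => by rw [← eval_comp_mul f π Z, ← eval_comp_mul f π Z, ← shear_mul, hf]) d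
  simpa only [DFunLike.coe_fn_eq] using this

theorem prod_extend_pow [Fintype V] [Fintype ρ] (hx : Function.Injective x) (M : ρ → k)
    (i : V →₀ ℕ) :
    ∏ v, Function.extend x M 1 v ^ i v = ∏ r, M r ^ i (x r) :=
  (Fintype.prod_of_injective x hx _ _
    (fun v hv => by simp [Function.extend_apply' _ _ _ hv])
    fun r => by simp [hx.extend_apply]).symm

theorem extend_sumElim_add_extend (hxy : Function.Injective (Sum.elim x y)) (X Y : ρ → k) :
    Function.extend (Sum.elim x y) (Sum.elim X Y) 1 +
        Function.extend x (Function.extend (Sum.elim x y) (Sum.elim X Y) 1 ∘ y) 0 =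
      Function.extend (Sum.elim x y) (Sum.elim (X + Y) Y) 1 := by
  have hx : Function.Injective x := hxy.comp Sum.inl_injective
  have extend_x F r : Function.extend (Sum.elim x y) F (1 : V → k) (x r) = F (.inl r) :=
    hxy.extend_apply F 1 (.inl r)
  have extend_y F r : Function.extend (Sum.elim x y) F (1 : V → k) (y r) = F (.inr r) :=
    hxy.extend_apply F 1 (.inr r)
  funext v
  by_cases hv : ∃ r, x r = v
  · obtain ⟨r, rfl⟩ := hv
    simp [hx.extend_apply, extend_x, extend_y]
  · rw [Pi.add_apply, Function.extend_apply' _ _ _ hv, Pi.zero_apply, add_zero]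
    by_cases hv' : ∃ r, y r = v
    · obtain ⟨r, rfl⟩ := hv'
      simp [extend_y]
    · have : ¬∃ r, Sum.elim x y r = v := by simp_all
      simp [Function.extend_apply' _ _ _ this]

theorem sum_prod_shear_eq_of_eval_shear_eq [IsDomain k] [Infinite k] [Finite V] [DecidableEq V]
    [Fintype ρ] (hxy : Function.Injective (Sum.elim x y))
    (hf : ∀ M : V → k, eval (M + Function.extend x (M ∘ y) 0) f = eval M f)
    {π : V → V} (hπ : π ∘ y = π ∘ x) (d : V →₀ ℕ) (X Y : ρ → k) :
    ∑ i ∈ f.support with i.mapDomain π = d,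
        coeff i f * ∏ r, (X r + Y r) ^ i (x r) * Y r ^ i (y r) =
      ∑ i ∈ f.support with i.mapDomain π = d,
        coeff i f * ∏ r, X r ^ i (x r) * Y r ^ i (y r) := by
  cases nonempty_fintype V
  have := sum_filter_mapDomain_eq_of_eval_shear_eq (hxy.comp Sum.inl_injective) hf hπ d
    (Function.extend (Sum.elim x y) (Sum.elim X Y) 1)
  rw [Sum.elim_comp_inl, extend_sumElim_add_extend hxy] at this
  simpa only [prod_extend_pow hxy, Fintype.prod_sum_type, Sum.elim_inl, Sum.elim_inr,
    Pi.add_apply, ← Finset.prod_mul_distrib] using this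

theorem mapDomain_extend_apply_left (hxy : Function.Injective (Sum.elim x y)) (i : V →₀ ℕ)
    (r : ρ) : i.mapDomain (Function.extend y x id) (x r) = i (x r) + i (y r) := by
  classical
  have hx : Function.Injective x := hxy.comp Sum.inl_injective
  have hy : Function.Injective y := hxy.comp Sum.inr_injective
  have ne r r' : x r ≠ y r' := fun h => Sum.inl_ne_inr (hxy h)
  induction i using Finsupp.induction_linear with
  | zero => simp
  | add i j hi hj => simp only [Finsupp.mapDomain_add, Finsupp.add_apply, hi, hj]; ring
  | single v n =>
    by_cases hv : ∃ r', y r' = v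
    · obtain ⟨r', rfl⟩ := hv
      simp [hy.extend_apply, Finsupp.single_apply, hx.eq_iff, hy.eq_iff, (ne _ _).symm]
    · have hvy : v ≠ y r := fun h => hv ⟨r, h.symm⟩
      simp [Function.extend_apply' _ _ _ hv, Finsupp.single_apply, hvy]

theorem mapDomain_extend_apply_of_notMem (hy : Function.Injective y) (i : V →₀ ℕ) {v : V}
    (hvx : v ∉ Set.range x) (hvy : v ∉ Set.range y) :
    i.mapDomain (Function.extend y x id) v = i v := by
  classical
  induction i using Finsupp.induction_linear with
  | zero => simp
  | add i j hi hj => simp only [Finsupp.mapDomain_add, Finsupp.add_apply, hi, hj]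
  | single u n =>
    by_cases hu : ∃ r, y r = u
    · obtain ⟨r, rfl⟩ := hu
      have hxv : x r ≠ v := fun h => hvx ⟨r, h⟩
      have hyv : y r ≠ v := fun h => hvy ⟨r, h⟩
      simp [hy.extend_apply, hxv, hyv]
    · simp [Function.extend_apply' _ _ _ hu]

theorem eq_of_mapDomain_extend_eq (hxy : Function.Injective (Sum.elim x y)) {i j : V →₀ ℕ}
    (h : i.mapDomain (Function.extend y x id) = j.mapDomain (Function.extend y x id))
    (hx : ∀ r, i (x r) = j (x r)) : i = j := by
  have hy : Function.Injective y := hxy.comp Sum.inr_injective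
  ext v
  have hv := DFunLike.congr_fun h v
  by_cases hvx : v ∈ Set.range x
  · obtain ⟨r, rfl⟩ := hvx
    exact hx r
  by_cases hvy : v ∈ Set.range y
  · obtain ⟨r, rfl⟩ := hvy
    have := DFunLike.congr_fun h (x r)
    rw [mapDomain_extend_apply_left hxy, mapDomain_extend_apply_left hxy, hx r] at this
    exact add_left_cancel this
  · rwa [mapDomain_extend_apply_of_notMem hy _ hvx hvy,
      mapDomain_extend_apply_of_notMem hy _ hvx hvy] at hv

end Substitution

section LeadingMonomialInequality

variable {K r0 r1 : ℕ} {f : KPoly K r0 r1} {ρ : Type*} [LinearOrder ρ] {x y : ρ → KVar K r0 r1}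

theorem isLM_degree (hf : f ≠ 0) : IsLM f ((varLex K r0 r1).degree f) := by
  refine ⟨(varLex K r0 r1).degree_mem_support hf, fun i hi => ?_⟩
  rw [← varLex_lt_iff]
  exact ((varLex K r0 r1).le_degree hi).eq_or_lt.imp_left fun h =>
    (varLex K r0 r1).toSyn.injective h

theorem IsLM.apply_le_of_forall_lt {m i : KVar K r0 r1 →₀ ℕ} (hm : IsLM f m)
    (hi : i ∈ f.support)
    (hxy : Function.Injective (Sum.elim x y)) (hlt : ∀ r' r, r' < r → VarGT (x r') (x r))
    (hgt : ∀ r, VarGT (x r) (y r))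
    (hmap : i.mapDomain (Function.extend y x id) = m.mapDomain (Function.extend y x id)) {s : ρ}
    (hs : ∀ r < s, i (x r) = m (x r)) : i (x s) ≤ m (x s) := by
  rcases hm.2 i hi with rfl | ⟨v, hv, eq_of_gt⟩
  · exact le_rfl
  by_cases hvx : v ∈ Set.range x
  · obtain ⟨r, rfl⟩ := hvx
    rcases lt_trichotomy r s with hr | rfl | hr
    · exact absurd (hs r hr) hv.ne
    · exact hv.le
    · exact (eq_of_gt _ (hlt s r hr)).le
  have hv' := DFunLike.congr_fun hmap v
  by_cases hvy : v ∈ Set.range y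
  · obtain ⟨r, rfl⟩ := hvy
    have hr := DFunLike.congr_fun hmap (x r)
    rw [mapDomain_extend_apply_left hxy, mapDomain_extend_apply_left hxy,
      eq_of_gt _ (hgt r)] at hr
    exact absurd (add_left_cancel hr) hv.ne
  · have hy : Function.Injective y := hxy.comp Sum.inr_injective
    rw [mapDomain_extend_apply_of_notMem hy _ hvx hvy,
      mapDomain_extend_apply_of_notMem hy _ hvx hvy] at hv'
    exact absurd hv' hv.ne

theorem IsLM.sum_ge_le_sum_gt [Fintype ρ] {m : KVar K r0 r1 →₀ ℕ} (hm : IsLM f m)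
    (hxy : Function.Injective (Sum.elim x y)) (hlt : ∀ r' r, r' < r → VarGT (x r') (x r))
    (hgt : ∀ r, VarGT (x r) (y r)) (hsum : ∀ i ∈ f.support, ∑ r, i (x r) = ∑ r, m (x r))
    (hf : ∀ M, eval (M + Function.extend x (M ∘ y) 0) f = eval M f) (s : ρ) :
    ∑ r with s ≤ r, m (x r) ≤ ∑ r with s < r, m (y r) := by
  let π := Function.extend y x id
  have hy : Function.Injective y := hxy.comp Sum.inr_injective
  have hπ : π ∘ y = π ∘ x := by
    funext r
    have : ¬∃ r', y r' = x r := fun ⟨r', h⟩ => Sum.inr_ne_inl (hxy h)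
    simp [π, hy.extend_apply, Function.extend_apply' _ _ _ this]
  refine sum_ge_le_sum_gt_of_shear_eq (S := f.support.filter fun i => i.mapDomain π = m.mapDomain π)
    (c := (coeff · f)) (a := fun i r => i (x r)) (b := fun i r => i (y r)) (m := m)
    (Finset.mem_filter.2 ⟨hm.1, rfl⟩) (mem_support_iff.1 hm.1)
    (fun i hi j hj hij => ?_) (fun i hi => ?_) (fun i hi => ?_) (fun i hi s hs => ?_)
    (sum_prod_shear_eq_of_eval_shear_eq hxy hf hπ _) s
  · exact eq_of_mapDomain_extend_eq hxy
      ((Finset.mem_filter.1 hi).2.trans (Finset.mem_filter.1 hj).2.symm) (congrFun hij)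
  · funext r
    have := DFunLike.congr_fun (Finset.mem_filter.1 hi).2 (x r)
    rwa [mapDomain_extend_apply_left hxy, mapDomain_extend_apply_left hxy] at this
  · exact hsum i (Finset.mem_filter.1 hi).1
  · exact hm.apply_le_of_forall_lt (Finset.mem_filter.1 hi).1 hxy hlt hgt
      (Finset.mem_filter.1 hi).2 hs

end LeadingMonomialInequality

section Weight

variable {V ρ : Type*}

theorem prod_pow_eq_of_eval_mul_eq {k : Type*} [CommRing k] [IsDomain k] [Infinite k] [Fintype V]
    {f : MvPolynomial V k} {u : V → k} {κ : k} (h : ∀ M, eval (u * M) f = κ * eval M f)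
    {m : V →₀ ℕ} (hm : m ∈ f.support) : ∏ v, u v ^ m v = κ := by
  classical
  have key := sum_filter_eq_of_forall_sum_mul_prod_pow_eq (S := f.support)
    (u := fun i => coeff i f * ∏ v, u v ^ i v) (v := fun i => κ * coeff i f)
    (e := fun i : V →₀ ℕ => ⇑i) (fun Z => by
      simpa only [eval_eq', Pi.mul_apply, mul_pow, Finset.prod_mul_distrib, Finset.mul_sum,
        mul_assoc] using h Z) m
  simp only [DFunLike.coe_fn_eq, Finset.filter_eq', hm, if_true, Finset.sum_singleton] at key
  rw [mul_comm] at key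
  exact mul_right_cancel₀ (mem_support_iff.1 hm) key

theorem sum_eq_of_eval_add_extend_eq [Finite V] [Fintype ρ] {f : MvPolynomial V ℂ} {x : ρ → V}
    (hx : Function.Injective x) {w : ℤ}
    (h : ∀ M : V → ℂ, eval (M + Function.extend x (M ∘ x) 0) f = 2 ^ w * eval M f)
    {m : V →₀ ℕ} (hm : m ∈ f.support) : ((∑ r, m (x r) : ℕ) : ℤ) = w := by
  cases nonempty_fintype V
  have extend_mul (M : V → ℂ) :
      Function.extend x (2 : ρ → ℂ) 1 * M = M + Function.extend x (M ∘ x) 0 := by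
    funext v
    by_cases hv : ∃ r, x r = v
    · obtain ⟨r, rfl⟩ := hv
      simp [hx.extend_apply, two_mul]
    · simp [Function.extend_apply' _ _ _ hv]
  have hprod : (2 : ℂ) ^ ((∑ r, m (x r) : ℕ) : ℤ) = 2 ^ w := by
    rw [← prod_pow_eq_of_eval_mul_eq (f := f) (u := Function.extend x (2 : ρ → ℂ) 1)
      (κ := 2 ^ w) (fun M => by rw [extend_mul, h]) hm, prod_extend_pow hx, zpow_natCast,
      ← Finset.prod_pow_eq_pow_sum]
    rfl
  have := congrArg norm hprod
  rw [norm_zpow, norm_zpow, Complex.norm_ofNat] at this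
  exact zpow_right_injective₀ (by norm_num) (by norm_num) this

end Weight

section LeadingMonomialConstraints

variable {K r0 r1 : ℕ} {f : KPoly K r0 r1} {w0 w1 : ℤ} {m : KVar K r0 r1 →₀ ℕ}

/-- The variable contributed by a box labeled `l` in row `p` of `T⁻`. -/
def minusVar (p : Fin r0) (l : Fin K ×ₗ Fin r1) : KVar K r0 r1 :=
  ((ofLex l).1, (ofLex l).2, p)

/-- The variable contributed by a box labeled `l` in row `q` of `T⁺`. -/
def plusVar (q : Fin r1) (l : Fin K ×ₗ Fin r0) : KVar K r0 r1 :=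
  ((ofLex l).1, q, (ofLex l).2)

/-- The variables of `T⁻`, indexed by row and label. -/
def minusVarEquiv : Fin r0 × (Fin K ×ₗ Fin r1) ≃ KVar K r0 r1 where
  toFun x := minusVar x.1 x.2
  invFun v := (v.2.2, toLex (v.1, v.2.1))

/-- The variables of `T⁺`, indexed by row and label. -/
def plusVarEquiv : Fin r1 × (Fin K ×ₗ Fin r0) ≃ KVar K r0 r1 where
  toFun x := plusVar x.1 x.2
  invFun v := (v.2.1, toLex (v.1, v.2.2))

theorem minusVar_injective (p : Fin r0) :
    Function.Injective (minusVar p : Fin K ×ₗ Fin r1 → KVar K r0 r1) :=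
  minusVarEquiv.injective.comp (Prod.mk_right_injective p)

theorem plusVar_injective (q : Fin r1) :
    Function.Injective (plusVar q : Fin K ×ₗ Fin r0 → KVar K r0 r1) :=
  plusVarEquiv.injective.comp (Prod.mk_right_injective q)

theorem extend_minusVar (p : Fin r0) (F : Fin K ×ₗ Fin r1 → ℂ) (v : KVar K r0 r1) :
    Function.extend (minusVar p) F 0 v = if v.2.2 = p then F (toLex (v.1, v.2.1)) else 0 := by
  obtain ⟨i, j, k⟩ := v
  split_ifs with h
  · subst h
    exact (minusVar_injective k).extend_apply F 0 (toLex (i, j))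
  · exact Function.extend_apply' _ _ _ fun ⟨l, hl⟩ => h (congrArg (·.2.2) hl).symm

theorem extend_plusVar (q : Fin r1) (F : Fin K ×ₗ Fin r0 → ℂ) (v : KVar K r0 r1) :
    Function.extend (plusVar q) F 0 v = if v.2.1 = q then F (toLex (v.1, v.2.2)) else 0 := by
  obtain ⟨i, j, k⟩ := v
  split_ifs with h
  · subst h
    exact (plusVar_injective j).extend_apply F 0 (toLex (i, k))
  · exact Function.extend_apply' _ _ _ fun ⟨l, hl⟩ => h (congrArg (·.2.1) hl).symm

theorem eval_glAct (g : Matrix (Fin r0) (Fin r0) ℂ) (h : Matrix (Fin r1) (Fin r1) ℂ)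
    (f : KPoly K r0 r1) (M : KVar K r0 r1 → ℂ) :
    eval M (glAct g h f) =
      eval (fun v => ∑ u : Fin r1 × Fin r0, h⁻¹ v.2.1 u.1 * g u.2 v.2.2 * M (v.1, u)) f := by
  have : (eval M).comp (glAct g h).toRingHom =
      eval fun v => ∑ u : Fin r1 × Fin r0, h⁻¹ v.2.1 u.1 * g u.2 v.2.2 * M (v.1, u) := by
    refine ringHom_ext (fun c => by simp) fun v => ?_
    simp [glAct_X]
  exact RingHom.congr_fun this f

theorem IsSemiInvariant.eval_add_extend_minusVar (hf : IsSemiInvariant f w0 w1) {p p' : Fin r0}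
    (hdet : IsUnit (Matrix.transvection p' p (1 : ℂ)).det) (M : KVar K r0 r1 → ℂ) :
    eval (M + Function.extend (minusVar p) (M ∘ minusVar p') 0) f =
      (Matrix.transvection p' p (1 : ℂ)).det ^ w0 * eval M f := by
  have := congrArg (eval M) (hf _ 1 hdet (by simp))
  rw [eval_glAct, map_mul, eval_C, Matrix.det_one, one_zpow, mul_one] at this
  rw [← this]
  congr 2
  funext ⟨i, j, k⟩
  simp [extend_minusVar, minusVar, Matrix.transvection, Fintype.sum_prod_type, add_mul,
    Finset.sum_add_distrib, Matrix.one_apply, Matrix.single_apply, ite_and, eq_comm (a := p)]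

theorem IsSemiInvariant.eval_add_extend_plusVar (hf : IsSemiInvariant f w0 w1) {q q' : Fin r1}
    (hdet : IsUnit (Matrix.transvection q q' (1 : ℂ)).det) (M : KVar K r0 r1 → ℂ) :
    eval (M + Function.extend (plusVar q) (M ∘ plusVar q') 0) f =
      (Matrix.transvection q q' (1 : ℂ)).det ^ (-w1) * eval M f := by
  have := congrArg (eval M) (hf 1 _ (by simp) (Matrix.isUnit_nonsing_inv_det _ hdet))
  rw [eval_glAct, map_mul, eval_C, Matrix.det_one, one_zpow, one_mul,
    Matrix.nonsing_inv_nonsing_inv _ hdet, Matrix.det_nonsing_inv, Ring.inverse_eq_inv',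
    inv_zpow'] at this
  rw [← this]
  congr 2
  funext ⟨i, j, k⟩
  simp [extend_plusVar, plusVar, Matrix.transvection, Fintype.sum_prod_type, add_mul,
    Finset.sum_add_distrib, Matrix.one_apply, Matrix.single_apply, ite_and, eq_comm (a := q)]

theorem det_transvection_self {n : ℕ} (i : Fin n) : (Matrix.transvection i i (1 : ℂ)).det = 2 := by
  have : Matrix.transvection i i (1 : ℂ) = Matrix.diagonal (1 + Pi.single i 1) := by
    rw [Matrix.transvection, ← Matrix.diagonal_one, ← Matrix.diagonal_single, Matrix.diagonal_add]
    rfl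
  rw [this, Matrix.det_diagonal, Finset.prod_eq_single i (fun j _ hj => by simp [hj]) (by simp)]
  simp [one_add_one_eq_two]

theorem IsSemiInvariant.sum_minusVar (hf : IsSemiInvariant f w0 w1) (hm : m ∈ f.support)
    (p : Fin r0) : ((∑ l, m (minusVar p l) : ℕ) : ℤ) = w0 :=
  sum_eq_of_eval_add_extend_eq (minusVar_injective p) (fun M => by
    rw [hf.eval_add_extend_minusVar (by simp [det_transvection_self]), det_transvection_self]) hm

theorem IsSemiInvariant.sum_plusVar (hf : IsSemiInvariant f w0 w1) (hm : m ∈ f.support)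
    (q : Fin r1) : ((∑ l, m (plusVar q l) : ℕ) : ℤ) = -w1 :=
  sum_eq_of_eval_add_extend_eq (plusVar_injective q) (fun M => by
    rw [hf.eval_add_extend_plusVar (by simp [det_transvection_self]), det_transvection_self]) hm

theorem IsSemiInvariant.sum_ge_minusVar_le (hf : IsSemiInvariant f w0 w1) (hm : IsLM f m)
    {p p' : Fin r0} (hp : p < p') (s : Fin K ×ₗ Fin r1) :
    ∑ l with s ≤ l, m (minusVar p l) ≤ ∑ l with s < l, m (minusVar p' l) := by
  refine hm.sum_ge_le_sum_gt (x := minusVar p) (y := minusVar p') ?_ (fun a b hab => ?_)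
    (fun l => .inr ⟨rfl, .inr ⟨rfl, hp⟩⟩) (fun i hi => ?_) (fun M => ?_) s
  · exact (minusVar_injective p).sumElim (minusVar_injective p')
      fun a b h => hp.ne (congrArg (·.2.2) h)
  · exact (Prod.Lex.lt_iff.1 hab).imp_right fun h => ⟨h.1, .inl h.2⟩
  · exact_mod_cast (hf.sum_minusVar hi p).trans (hf.sum_minusVar hm.1 p).symm
  · rw [hf.eval_add_extend_minusVar (by simp [Matrix.det_transvection_of_ne _ _ hp.ne']),
      Matrix.det_transvection_of_ne _ _ hp.ne', one_zpow, one_mul]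

theorem IsSemiInvariant.sum_ge_plusVar_le (hf : IsSemiInvariant f w0 w1) (hm : IsLM f m)
    {q q' : Fin r1} (hq : q < q') (s : Fin K ×ₗ Fin r0) :
    ∑ l with s ≤ l, m (plusVar q l) ≤ ∑ l with s < l, m (plusVar q' l) := by
  refine hm.sum_ge_le_sum_gt (x := plusVar q) (y := plusVar q') ?_ (fun a b hab => ?_)
    (fun l => .inr ⟨rfl, .inl hq⟩) (fun i hi => ?_) (fun M => ?_) s
  · exact (plusVar_injective q).sumElim (plusVar_injective q')
      fun a b h => hq.ne (congrArg (·.2.1) h)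
  · exact (Prod.Lex.lt_iff.1 hab).imp_right fun h => ⟨h.1, .inr ⟨rfl, h.2⟩⟩
  · exact_mod_cast (hf.sum_plusVar hi q).trans (hf.sum_plusVar hm.1 q).symm
  · rw [hf.eval_add_extend_plusVar (by simp [Matrix.det_transvection_of_ne _ _ hq.ne]),
      Matrix.det_transvection_of_ne _ _ hq.ne, one_zpow, one_mul]

end LeadingMonomialConstraints

section Rows

variable {Λ : Type*} {c : ℕ}

theorem card_filter_comp_eq_sum [Fintype Λ] [DecidableEq Λ] (t : Fin c → Λ) (P : Λ → Prop)
    [DecidablePred P] :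
    (Finset.univ.filter fun k => P (t k)).card =
      ∑ l with P l, (Finset.univ.filter fun k => t k = l).card := by
  rw [Finset.card_eq_sum_card_fiberwise (f := t) (t := {l | P l}) fun k hk => by simpa using hk]
  refine Finset.sum_congr rfl fun l hl => ?_
  rw [Finset.filter_filter]
  refine congrArg _ (Finset.filter_congr fun k _ => and_iff_right_of_imp ?_)
  rintro rfl
  exact (Finset.mem_filter.1 hl).2

theorem sum_card_filter_eq [Fintype Λ] [DecidableEq Λ] (t : Fin c → Λ) :
    ∑ l, (Finset.univ.filter fun k => t k = l).card = c := by
  rw [← Finset.card_eq_sum_card_fiberwise fun k _ => Finset.mem_univ (t k), Finset.card_fin]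

theorem sum_single_row_apply {P V : Type*} [Fintype P] [DecidableEq Λ] (x : P × Λ ≃ V)
    (t : P → Fin c → Λ) (p : P) (l : Λ) :
    (∑ p', ∑ k, Finsupp.single (x (p', t p' k)) 1) (x (p, l)) =
      (Finset.univ.filter fun k => t p k = l).card := by
  classical
  rw [← Fintype.sum_prod_type' (f := fun p' k => Finsupp.single (x (p', t p' k)) 1),
    sum_single_one_apply]
  simp only [Finset.card_filter, x.injective.eq_iff, Prod.mk.injEq, ite_and, Fintype.sum_prod_type,
    Finset.sum_ite_irrel, Finset.sum_const_zero, Finset.sum_ite_eq', Finset.mem_univ, if_true]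

theorem eq_of_monotone_of_card_filter_eq [PartialOrder Λ] [DecidableEq Λ] {t t' : Fin c → Λ}
    (ht : Monotone t) (ht' : Monotone t')
    (h : ∀ l, (Finset.univ.filter fun k => t k = l).card =
      (Finset.univ.filter fun k => t' k = l).card) : t = t' := by
  have hmap : Finset.univ.val.map t = Finset.univ.val.map t' := by
    ext l
    simp only [Multiset.count_map, eq_comm (a := l)]
    exact h l
  rw [Fin.univ_val_map, Fin.univ_val_map, Multiset.coe_eq_coe] at hmap
  exact List.ofFn_injective
    (hmap.eq_of_pairwise' ht.sortedLE_ofFn.pairwise ht'.sortedLE_ofFn.pairwise)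

theorem lt_of_sum_ge_le_sum_gt [Fintype Λ] [LinearOrder Λ] {t t' : Fin c → Λ} (ht : Monotone t)
    (ht' : Monotone t')
    (h : ∀ s, ∑ l with s ≤ l, (Finset.univ.filter fun k => t k = l).card ≤
      ∑ l with s < l, (Finset.univ.filter fun k => t' k = l).card) (k : Fin c) : t k < t' k := by
  specialize h (t k)
  rw [← card_filter_comp_eq_sum, ← card_filter_comp_eq_sum] at h
  have hge := Finset.card_filter_add_card_filter_not (s := Finset.univ) fun j => t k ≤ t j
  have hgt := Finset.card_filter_add_card_filter_not (s := Finset.univ) fun j => t k < t' j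
  simp only [not_le, not_lt] at hge hgt
  have hlt : ¬(k : ℕ) < (Finset.univ.filter fun j => t j < t k).card := by
    rw [Tuple.lt_card_lt_iff_apply_lt_of_monotone ht]
    exact lt_irrefl _
  rw [← not_le, ← Tuple.lt_card_le_iff_apply_le_of_monotone ht']
  lia

variable [LinearOrder Λ] [Fintype Λ]

/-- The weakly increasing row with content `n`: the labels are the first components, the second
components number the occurrences of each label from left to right. -/
noncomputable def sortedRow (n : Λ → ℕ) (h : ∑ l, n l = c) : Fin c ≃o Σₗ l, Fin (n l) :=
  Fintype.orderIsoFinOfCardEq _ <| by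
    rw [← h, Fintype.card_congr (ofLex : (Σₗ l, Fin (n l)) ≃ _), Fintype.card_sigma]
    simp only [Fintype.card_fin]

theorem monotone_sortedRow_fst (n : Λ → ℕ) (h : ∑ l, n l = c) :
    Monotone fun k => (ofLex (sortedRow n h k)).1 := fun _ _ hk =>
  (Sigma.Lex.le_def.1 ((sortedRow n h).monotone hk)).elim LT.lt.le fun ⟨h, _⟩ => h.le

theorem sortedRow_snd_lt {n : Λ → ℕ} (h : ∑ l, n l = c) {k k' : Fin c} (hk : k < k')
    (heq : (ofLex (sortedRow n h k)).1 = (ofLex (sortedRow n h k')).1) :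
    ((ofLex (sortedRow n h k)).2 : ℕ) < (ofLex (sortedRow n h k')).2 := by
  have hlt := (sortedRow n h).strictMono hk
  generalize sortedRow n h k = z at hlt heq
  generalize sortedRow n h k' = z' at hlt heq
  induction z with | h z =>
  induction z' with | h z' =>
  obtain ⟨l, i⟩ := z
  obtain ⟨l', i'⟩ := z'
  simp only [ofLex_toLex] at heq ⊢
  subst heq
  exact (Sigma.Lex.lt_def.1 hlt).elim (fun h => absurd h (lt_irrefl _)) fun ⟨_, h⟩ => h

variable {P V : Type*}

/-- The boxes of the tableau whose row `p` is sorted with content `l ↦ m (x (p, l))`, indexed by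
the variable `v` they contribute and their position among the `m v` boxes contributing `v`. -/
noncomputable def boxEquiv (x : P × Λ ≃ V) (m : V → ℕ) (h : ∀ p, ∑ l, m (x (p, l)) = c) :
    P × Fin c ≃ Σ v, Fin (m v) :=
  (Equiv.sigmaEquivProd P (Fin c)).symm.trans <|
    (Equiv.sigmaCongrRight fun p =>
      (sortedRow (fun l => m (x (p, l))) (h p)).toEquiv.trans ofLex).trans <|
    (Equiv.sigmaAssocProd (γ := fun p l => Fin (m (x (p, l))))).symm.trans <|
    Equiv.sigmaCongrLeft (β := fun v => Fin (m v)) x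

theorem boxEquiv_snd_lt (x : P × Λ ≃ V) {m : V → ℕ} (h : ∀ p, ∑ l, m (x (p, l)) = c) {p : P}
    {k k' : Fin c} (hk : k < k')
    (heq : (boxEquiv x m h (p, k)).1 = (boxEquiv x m h (p, k')).1) :
    ((boxEquiv x m h (p, k)).2 : ℕ) < (boxEquiv x m h (p, k')).2 :=
  sortedRow_snd_lt (h p) hk (Prod.ext_iff.1 (x.injective heq)).2

theorem sum_single_boxEquiv_fst [Fintype P] [Finite V] (x : P × Λ ≃ V) (m : V →₀ ℕ)
    (h : ∀ p, ∑ l, m (x (p, l)) = c) :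
    ∑ b, Finsupp.single (boxEquiv x m h b).1 1 = m := by
  cases nonempty_fintype V
  rw [Equiv.sum_comp (boxEquiv x m h) fun z => Finsupp.single z.1 1, Fintype.sum_sigma]
  simp only [Finset.sum_const, Finset.card_fin, Finsupp.smul_single, smul_eq_mul, mul_one]
  exact Finsupp.univ_sum_single m

end Rows

section Pairs

variable {K r0 r1 cm cp : ℕ}

theorem isSemiStandardTab_iff {rows cols n : ℕ} {T : Fin rows → Fin cols → Fin K × Fin n} :
    IsSemiStandardTab T ↔
      (∀ i, Monotone fun c => toLex (T i c)) ∧ ∀ c, StrictMono fun i => toLex (T i c) := by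
  simp only [IsSemiStandardTab, Monotone, StrictMono, Prod.Lex.le_iff, Prod.Lex.lt_iff]
  rfl

namespace LinkedPair

theorem monExpM_eq_monExpP (L : LinkedPair K r0 r1 cm cp) : monExpM L = monExpP L := by
  rw [monExpP_eq_sum_boxVar, monExpM, ← Fintype.sum_prod_type']
  exact Finset.sum_congr rfl fun b _ => by rw [Tm_eq_boxVar]; rfl

theorem card_Tm_eq (L : LinkedPair K r0 r1 cm cp) (p : Fin r0) (l : Fin K ×ₗ Fin r1) :
    (Finset.univ.filter fun c => toLex (L.Tm p c) = l).card = monExpP L (minusVar p l) := by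
  rw [← monExpM_eq_monExpP]
  exact (sum_single_row_apply minusVarEquiv (fun p c => toLex (L.Tm p c)) p l).symm

theorem card_Tp_eq (L : LinkedPair K r0 r1 cm cp) (q : Fin r1) (l : Fin K ×ₗ Fin r0) :
    (Finset.univ.filter fun c => toLex (L.Tp q c) = l).card = monExpP L (plusVar q l) :=
  (sum_single_row_apply plusVarEquiv (fun q c => toLex (L.Tp q c)) q l).symm

theorem sum_minusVar (L : LinkedPair K r0 r1 cm cp) (p : Fin r0) :
    ∑ l, monExpP L (minusVar p l) = cm := by
  simp only [← card_Tm_eq, sum_card_filter_eq]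

theorem sum_plusVar (L : LinkedPair K r0 r1 cm cp) (q : Fin r1) :
    ∑ l, monExpP L (plusVar q l) = cp := by
  simp only [← card_Tp_eq, sum_card_filter_eq]

section Uniqueness

variable {L L' : LinkedPair K r0 r1 cm cp}

theorem Tm_eq_of_monExpP_eq (hL : IsSemiStandardTab L.Tm) (hL' : IsSemiStandardTab L'.Tm)
    (h : monExpP L = monExpP L') : L.Tm = L'.Tm := by
  funext p c
  have hrow := eq_of_monotone_of_card_filter_eq ((isSemiStandardTab_iff.1 hL).1 p)
    ((isSemiStandardTab_iff.1 hL').1 p) fun l => by rw [card_Tm_eq, card_Tm_eq, h]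
  exact toLex.injective (congrFun hrow c)

theorem Tp_eq_of_monExpP_eq (hL : IsSemiStandardTab L.Tp) (hL' : IsSemiStandardTab L'.Tp)
    (h : monExpP L = monExpP L') : L.Tp = L'.Tp := by
  funext q c
  have hrow := eq_of_monotone_of_card_filter_eq ((isSemiStandardTab_iff.1 hL).1 q)
    ((isSemiStandardTab_iff.1 hL').1 q) fun l => by rw [card_Tp_eq, card_Tp_eq, h]
  exact toLex.injective (congrFun hrow c)

theorem range_link_snd (L : LinkedPair K r0 r1 cm cp) (p : Fin r0) (l : Fin K × Fin r1) :
    Set.range (fun c : {c // L.Tm p c = l} => (L.link (p, c)).2) =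
      {c | L.Tp l.2 c = (l.1, p)} := by
  refine Set.Subset.antisymm ?_ fun c hc => ?_
  · rintro _ ⟨⟨c, rfl⟩, rfl⟩
    rw [Set.mem_ofPred_eq, ← L.link_row, L.link_label]
  · obtain ⟨⟨p', c'⟩, hb⟩ := L.link.surjective (l.2, c)
    have hlabel := L.link_label p' c'
    have hrow := L.link_row p' c'
    rw [hb] at hlabel hrow
    obtain ⟨hfst, rfl⟩ := Prod.ext_iff.1 (Eq.trans (Eq.symm hc) hlabel)
    exact ⟨⟨c', Prod.ext hfst.symm hrow.symm⟩, congrArg Prod.snd hb⟩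

theorem strictMono_link_snd (hL : IsSemiStandardLink L) (p : Fin r0) (l : Fin K × Fin r1) :
    StrictMono fun c : {c // L.Tm p c = l} => (L.link (p, c)).2 := fun c c' hc =>
  hL p c c' (c.2.trans c'.2.symm) hc

theorem link_eq_of_Tm_eq_of_Tp_eq (hL : IsSemiStandardLink L) (hL' : IsSemiStandardLink L')
    (hm : L.Tm = L'.Tm) (hp : L.Tp = L'.Tp) : L.link = L'.link := by
  ext1 ⟨p, c⟩
  refine Prod.ext (by rw [L.link_row, L'.link_row, hm]) ?_
  have hmono' := strictMono_link_snd hL' p (L.Tm p c)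
  have hrange := L'.range_link_snd p (L.Tm p c)
  rw [← hm] at hmono' hrange
  rw [← hp, ← L.range_link_snd] at hrange
  exact congrFun ((StrictMono.range_inj (strictMono_link_snd hL p _) hmono').1 hrange.symm) ⟨c, rfl⟩

theorem eq_of_monExpP_eq (hL : IsSemiStandardPair L) (hL' : IsSemiStandardPair L')
    (h : monExpP L = monExpP L') : L = L' := by
  have hm := Tm_eq_of_monExpP_eq hL.1 hL'.1 h
  have hp := Tp_eq_of_monExpP_eq hL.2.1 hL'.2.1 h
  have hlink := link_eq_of_Tm_eq_of_Tp_eq hL.2.2 hL'.2.2 hm hp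
  cases L
  cases L'
  simp_all

end Uniqueness

section Existence

variable {m : KVar K r0 r1 →₀ ℕ}

theorem minusVar_eq_plusVar_iff {p : Fin r0} {q : Fin r1} {l : Fin K ×ₗ Fin r1}
    {l' : Fin K ×ₗ Fin r0} :
    minusVar p l = plusVar q l' ↔ q = (ofLex l).2 ∧ ofLex l' = ((ofLex l).1, p) := by
  simp only [minusVar, plusVar, Prod.ext_iff]
  tauto

/-- The linked tableaux pair with sorted rows whose monomial has exponent vector `m`. -/
noncomputable def ofExponent (hm : ∀ p, ∑ l, m (minusVar p l) = cm)
    (hp : ∀ q, ∑ l, m (plusVar q l) = cp) : LinkedPair K r0 r1 cm cp where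
  Tm p c := ofLex (ofLex (sortedRow _ (hm p) c)).1
  Tp q c := ofLex (ofLex (sortedRow _ (hp q) c)).1
  link := (boxEquiv minusVarEquiv m hm).trans (boxEquiv plusVarEquiv m hp).symm
  link_row p c := (minusVar_eq_plusVar_iff.1 (congrArg Sigma.fst
    ((boxEquiv plusVarEquiv m hp).apply_symm_apply (boxEquiv minusVarEquiv m hm (p, c))).symm)).1
  link_label p c := (minusVar_eq_plusVar_iff.1 (congrArg Sigma.fst
    ((boxEquiv plusVarEquiv m hp).apply_symm_apply (boxEquiv minusVarEquiv m hm (p, c))).symm)).2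

variable (hm : ∀ p, ∑ l, m (minusVar p l) = cm) (hp : ∀ q, ∑ l, m (plusVar q l) = cp)

theorem monExpP_ofExponent : monExpP (ofExponent hm hp) = m := by
  rw [← monExpM_eq_monExpP, monExpM, ← Fintype.sum_prod_type']
  exact sum_single_boxEquiv_fst minusVarEquiv m hm

theorem isSemiStandardLink_ofExponent : IsSemiStandardLink (ofExponent hm hp) := by
  intro p c c' hT hc
  let em := boxEquiv minusVarEquiv m hm
  let ep := boxEquiv plusVarEquiv m hp
  obtain ⟨⟨q, d⟩, hd⟩ := ep.surjective (em (p, c))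
  obtain ⟨⟨q', d'⟩, hd'⟩ := ep.surjective (em (p, c'))
  have hvar : (em (p, c)).1 = (em (p, c')).1 := congrArg (minusVar p) (ofLex.injective hT)
  have hlt : ((em (p, c)).2 : ℕ) < (em (p, c')).2 := boxEquiv_snd_lt minusVarEquiv hm hc hvar
  rw [← hd, ← hd'] at hvar hlt
  obtain rfl : q = q' := congrArg (fun v => v.2.1) hvar
  change (ep.symm (em (p, c))).2 < (ep.symm (em (p, c'))).2
  rw [← hd, ← hd', Equiv.symm_apply_apply, Equiv.symm_apply_apply]
  refine lt_of_not_ge fun hle => ?_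
  rcases hle.eq_or_lt with rfl | hlt'
  · exact lt_irrefl _ hlt
  · exact lt_asymm hlt (boxEquiv_snd_lt plusVarEquiv hp hlt' hvar.symm)

theorem isSemiStandardPair_ofExponent
    (im : ∀ p p', p < p' → ∀ s : Fin K ×ₗ Fin r1,
      ∑ l with s ≤ l, m (minusVar p l) ≤ ∑ l with s < l, m (minusVar p' l))
    (ip : ∀ q q', q < q' → ∀ s : Fin K ×ₗ Fin r0,
      ∑ l with s ≤ l, m (plusVar q l) ≤ ∑ l with s < l, m (plusVar q' l)) :
    IsSemiStandardPair (ofExponent hm hp) := by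
  have hTm p := monotone_sortedRow_fst _ (hm p)
  have hTp q := monotone_sortedRow_fst _ (hp q)
  refine ⟨isSemiStandardTab_iff.2 ⟨hTm, fun c p p' h => ?_⟩,
    isSemiStandardTab_iff.2 ⟨hTp, fun c q q' h => ?_⟩, isSemiStandardLink_ofExponent hm hp⟩
  · refine lt_of_sum_ge_le_sum_gt (t := fun c => toLex ((ofExponent hm hp).Tm p c))
      (t' := fun c => toLex ((ofExponent hm hp).Tm p' c)) (hTm p) (hTm p') (fun s => ?_) c
    simpa only [card_Tm_eq, monExpP_ofExponent] using im p p' h s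
  · refine lt_of_sum_ge_le_sum_gt (t := fun c => toLex ((ofExponent hm hp).Tp q c))
      (t' := fun c => toLex ((ofExponent hm hp).Tp q' c)) (hTp q) (hTp q') (fun s => ?_) c
    simpa only [card_Tp_eq, monExpP_ofExponent] using ip q q' h s

end Existence

end LinkedPair

end Pairs

section Basis

variable {K r0 r1 : ℕ}

/-- The family of semi-invariants indexed by all semi-standard linked tableaux pairs. -/
noncomputable def semiStandardPoly
    (A : Σ cm : ℕ, Σ cp : ℕ, {L : LinkedPair K r0 r1 cm cp // IsSemiStandardPair L}) :
    KPoly K r0 r1 :=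
  pairPoly A.2.2.1

theorem injective_degree_semiStandardPoly (h0 : 1 ≤ r0) (h1 : 1 ≤ r1) :
    Function.Injective fun A => (varLex K r0 r1).degree (semiStandardPoly A) := by
  rintro ⟨cm, cp, L, hL⟩ ⟨cm', cp', L', hL'⟩ h
  simp only [semiStandardPoly, LinkedPair.degree_pairPoly, hL, hL'] at h
  obtain rfl : cm = cm' := by rw [← L.sum_minusVar ⟨0, h0⟩, h, L'.sum_minusVar]
  obtain rfl : cp = cp' := by rw [← L.sum_plusVar ⟨0, h1⟩, h, L'.sum_plusVar]
  obtain rfl := LinkedPair.eq_of_monExpP_eq hL hL' h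
  rfl

theorem IsSemiInvariant.exists_degree_semiStandardPoly_eq (h0 : 1 ≤ r0) (h1 : 1 ≤ r1)
    {f : KPoly K r0 r1} {w0 w1 : ℤ} (hf : IsSemiInvariant f w0 w1) (hne : f ≠ 0) :
    ∃ A, IsSemiInvariant (semiStandardPoly A) w0 w1 ∧
      (varLex K r0 r1).degree (semiStandardPoly A) = (varLex K r0 r1).degree f := by
  have hlm := isLM_degree hne
  set m := (varLex K r0 r1).degree f
  obtain ⟨cm, rfl⟩ : ∃ cm : ℕ, w0 = cm := ⟨_, (hf.sum_minusVar hlm.1 ⟨0, h0⟩).symm⟩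
  obtain ⟨cp, rfl⟩ : ∃ cp : ℕ, w1 = -cp :=
    ⟨_, neg_eq_iff_eq_neg.1 (hf.sum_plusVar hlm.1 ⟨0, h1⟩).symm⟩
  have hm (p) : ∑ l, m (minusVar p l) = cm := by exact_mod_cast hf.sum_minusVar hlm.1 p
  have hp (q) : ∑ l, m (plusVar q l) = cp := by
    exact_mod_cast (hf.sum_plusVar hlm.1 q).trans (neg_neg _)
  have hL := LinkedPair.isSemiStandardPair_ofExponent hm hp
    (fun _ _ => hf.sum_ge_minusVar_le hlm) fun _ _ => hf.sum_ge_plusVar_le hlm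
  refine ⟨⟨cm, cp, _, hL⟩, LinkedPair.isSemiInvariant_pairPoly _, ?_⟩
  rw [semiStandardPoly, LinkedPair.degree_pairPoly hL, LinkedPair.monExpP_ofExponent]

end Basis

/-- The semi-invariants attached to semi-standard linked
tableaux pairs form a `ℂ`-vector space basis of the semi-invariant ring:
the family is linearly independent and spans the semi-invariant ring. -/
theorem statement10 (K r0 r1 : ℕ) (hK : 1 ≤ K) (h0 : 1 ≤ r0) (h1 : 1 ≤ r1) :
    LinearIndependent ℂ
      (fun L : Σ cm : ℕ, Σ cp : ℕ,
          {L : LinkedPair K r0 r1 cm cp // IsSemiStandardPair L} =>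
        pairPoly L.2.2.1) ∧
    Submodule.span ℂ
      (Set.range fun L : Σ cm : ℕ, Σ cp : ℕ,
          {L : LinkedPair K r0 r1 cm cp // IsSemiStandardPair L} =>
        pairPoly L.2.2.1) = semiInvariantRing K r0 r1 := by
  change LinearIndependent ℂ semiStandardPoly ∧
    Submodule.span ℂ (Set.range semiStandardPoly) = semiInvariantRing K r0 r1
  have hne A : semiStandardPoly (K := K) (r0 := r0) (r1 := r1) A ≠ 0 :=
    LinkedPair.pairPoly_ne_zero A.2.2.2
  refine ⟨linearIndependent_of_injective_degree (varLex K r0 r1) hne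
    (injective_degree_semiStandardPoly h0 h1), le_antisymm ?_ ?_⟩
  · refine Submodule.span_mono ?_
    rintro _ ⟨A, rfl⟩
    exact ⟨_, _, LinkedPair.isSemiInvariant_pairPoly A.2.2.1⟩
  · refine Submodule.span_le.2 ?_
    rintro f ⟨w0, w1, hf⟩
    exact le_span_range_of_degree (varLex K r0 r1) hne (V := weightSpace K r0 r1 w0 w1)
      (fun _ hg hg0 => IsSemiInvariant.exists_degree_semiStandardPoly_eq h0 h1 hg hg0) hf

end QuiverSAGBI
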